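/- arXiv:math/0510273 — 4 statements merged into one kernel-verified Lean document; each statement's English description precedes it below -/
import Mathlib

section
/- Let F be a distribution on [0,∞) with Laplace transform φ(γ) = ∫ e^{γx} F(dx) and γ̂ = sup{γ : φ(γ) < ∞} ∈ (0,∞]. If for every fixed y > 0, liminf_{x→∞} F̄(x−y)/F̄(x) ≥ e^{γ̂ y}, then liminf_{x→∞} (F*F)‾(x)/F̄(x) = 2φ(γ̂) (where both sides may be infinite). -/
open MeasureTheory Filter Real Set
open scoped ENNReal Topology

noncomputable section

/-- Convolution of two measures on ℝ: distribution of the sum of independent r.v.'s. -/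
def mconv (μ ν : MeasureTheory.Measure ℝ) : MeasureTheory.Measure ℝ :=
  MeasureTheory.Measure.map (fun p : ℝ × ℝ => p.1 + p.2) (μ.prod ν)

/-- The tail F̄(x) = F(x,∞). -/
def tail (F : MeasureTheory.Measure ℝ) (x : ℝ) : ℝ≥0∞ := F (Set.Ioi x)

/-- Laplace transform φ(γ) = ∫ e^{γx} F(dx), with value in [0,∞]. -/
def phi (F : MeasureTheory.Measure ℝ) (γ : ℝ) : ℝ≥0∞ :=
  ∫⁻ x, ENNReal.ofReal (Real.exp (γ * x)) ∂F

/-- F is heavy-tailed: φ(γ) = ∞ for every γ > 0. -/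
def IsHeavyTailed (F : MeasureTheory.Measure ℝ) : Prop :=
  ∀ γ : ℝ, 0 < γ → phi F γ = ⊤

/-- γ̂ = sup{γ : φ(γ) < ∞} ∈ [0,∞] (for distributions on [0,∞)). -/
def gammaHat (F : MeasureTheory.Measure ℝ) : ℝ≥0∞ :=
  sSup {p : ℝ≥0∞ | ∃ γ : ℝ, p = ENNReal.ofReal γ ∧ phi F γ < ⊤}

/-- φ(γ̂) = lim_{γ↑γ̂} φ(γ), realized (by monotonicity of φ) as sup over γ < γ̂. -/
def phiHat (F : MeasureTheory.Measure ℝ) : ℝ≥0∞ :=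
  ⨆ (γ : ℝ) (_ : ENNReal.ofReal γ < gammaHat F ∨ γ < 0), phi F γ

/-- e^{γ̂ y} ∈ (0,∞], realized as sup of e^{γy} over γ < γ̂ (equals e^{γ̂y} by continuity,
and ∞ when γ̂ = ∞). -/
def expGammaHat (F : MeasureTheory.Measure ℝ) (y : ℝ) : ℝ≥0∞ :=
  ⨆ (γ : ℝ) (_ : ENNReal.ofReal γ < gammaHat F ∨ γ < 0), ENNReal.ofReal (Real.exp (γ * y))


lemma tail_mconv_ge (F : Measure ℝ) [IsProbabilityMeasure F] (A x : ℝ) (hx : 2 * A < x) :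
    2 * ∫⁻ y in Iic A, tail F (x - y) ∂F ≤ tail (mconv F F) x := by
  have hadd : Measurable (fun p : ℝ × ℝ => p.1 + p.2) := by fun_prop
  have hS1 : MeasurableSet {p : ℝ × ℝ | p.1 ≤ A ∧ x < p.1 + p.2} :=
    (measurableSet_le measurable_fst measurable_const).inter
      (measurableSet_lt measurable_const hadd)
  have hS2 : MeasurableSet {p : ℝ × ℝ | p.2 ≤ A ∧ x < p.1 + p.2} :=
    (measurableSet_le measurable_snd measurable_const).inter
      (measurableSet_lt measurable_const hadd)
  have hm1 : (F.prod F) {p : ℝ × ℝ | p.1 ≤ A ∧ x < p.1 + p.2}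
      = ∫⁻ y in Iic A, tail F (x - y) ∂F := by
    rw [Measure.prod_apply hS1, ← lintegral_indicator measurableSet_Iic]
    refine lintegral_congr fun y => ?_
    by_cases hy : y ≤ A
    · have : (Prod.mk y ⁻¹' {p : ℝ × ℝ | p.1 ≤ A ∧ x < p.1 + p.2}) = Ioi (x - y) := by
        ext z; simp [hy, sub_lt_iff_lt_add']
      rw [this]; simp [hy, tail]
    · have : (Prod.mk y ⁻¹' {p : ℝ × ℝ | p.1 ≤ A ∧ x < p.1 + p.2}) = ∅ := by
        ext z; simp [hy]
      rw [this]; simp [hy]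
  have hm2 : (F.prod F) {p : ℝ × ℝ | p.2 ≤ A ∧ x < p.1 + p.2}
      = ∫⁻ y in Iic A, tail F (x - y) ∂F := by
    rw [Measure.prod_apply_symm hS2, ← lintegral_indicator measurableSet_Iic]
    refine lintegral_congr fun y => ?_
    by_cases hy : y ≤ A
    · have : ((fun z => (z, y)) ⁻¹' {p : ℝ × ℝ | p.2 ≤ A ∧ x < p.1 + p.2}) = Ioi (x - y) := by
        ext z; simp [hy, sub_lt_iff_lt_add]
      rw [this]; simp [hy, tail]
    · have : ((fun z => (z, y)) ⁻¹' {p : ℝ × ℝ | p.2 ≤ A ∧ x < p.1 + p.2}) = ∅ := by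
        ext z; simp [hy]
      rw [this]; simp [hy]
  have hdisj : Disjoint {p : ℝ × ℝ | p.1 ≤ A ∧ x < p.1 + p.2}
      {p : ℝ × ℝ | p.2 ≤ A ∧ x < p.1 + p.2} := by
    rw [Set.disjoint_left]
    rintro p ⟨h1, h2⟩ ⟨h3, h4⟩
    linarith
  rw [two_mul]
  nth_rewrite 1 [← hm1]
  rw [← hm2, ← measure_union hdisj hS2, tail, mconv, Measure.map_apply hadd measurableSet_Ioi]
  apply measure_mono
  rintro p (⟨_, h⟩ | ⟨_, h⟩) <;> exact h

lemma tail_ne_top (F : Measure ℝ) [IsProbabilityMeasure F] (x : ℝ) : tail F x ≠ ⊤ :=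
  measure_ne_top _ _

lemma tail_anti (F : Measure ℝ) : Antitone (tail F) :=
  fun _ _ h => measure_mono (Ioi_subset_Ioi h)

lemma ae_nonneg_of (F : Measure ℝ) (hsupp : F (Set.Iio 0) = 0) : ∀ᵐ y ∂F, 0 ≤ y := by
  rw [ae_iff]; simpa [Set.Iio] using hsupp

lemma lower_bound (F : Measure ℝ) [IsProbabilityMeasure F]
    (hsupp : F (Set.Iio 0) = 0) (hub : ∀ x : ℝ, tail F x ≠ 0)
    (hins : ∀ y : ℝ, 0 < y →
      expGammaHat F y ≤ liminf (fun x : ℝ => tail F (x - y) / tail F x) atTop) :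
    2 * phiHat F ≤ liminf (fun x : ℝ => tail (mconv F F) x / tail F x) atTop := by
  have key : ∀ (γ : ℝ), (ENNReal.ofReal γ < gammaHat F ∨ γ < 0) → ∀ A : ℝ,
      2 * ∫⁻ y in Iic A, ENNReal.ofReal (Real.exp (γ * y)) ∂F ≤
        liminf (fun x : ℝ => tail (mconv F F) x / tail F x) atTop := by
    intro γ hγ A
    have hmeas : ∀ x : ℝ, Measurable (fun y => 2 * (tail F (x - y) / tail F x)) := by
      intro x
      have : Measurable (fun y => tail F (x - y)) :=
        (tail_anti F).measurable.comp (by fun_prop)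
      exact (this.div_const _).const_mul _
    calc 2 * ∫⁻ y in Iic A, ENNReal.ofReal (Real.exp (γ * y)) ∂F
        = ∫⁻ y in Iic A, 2 * ENNReal.ofReal (Real.exp (γ * y)) ∂F := by
          rw [lintegral_const_mul _ (by fun_prop)]
      _ ≤ ∫⁻ y in Iic A, liminf (fun x => 2 * (tail F (x - y) / tail F x)) atTop ∂F := by
          apply lintegral_mono_ae
          filter_upwards [ae_restrict_of_ae (ae_nonneg_of F hsupp)] with y hy
          rw [ENNReal.liminf_const_mul_of_ne_top (by simp)]
          gcongr
          rcases hy.eq_or_lt with rfl | hy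
          · have : ∀ x, tail F (x - 0) / tail F x = 1 := fun x => by
              rw [sub_zero]; exact ENNReal.div_self (hub x) (tail_ne_top F x)
            simp only [this, mul_zero, Real.exp_zero, ENNReal.ofReal_one, liminf_const, le_refl]
          · refine le_trans ?_ (hins y hy)
            exact le_iSup₂ (f := fun (γ : ℝ) (_ : ENNReal.ofReal γ < gammaHat F ∨ γ < 0) =>
              ENNReal.ofReal (Real.exp (γ * y))) γ hγ
      _ ≤ liminf (fun x => ∫⁻ y in Iic A, 2 * (tail F (x - y) / tail F x) ∂F) atTop :=
          lintegral_liminf_le hmeas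
      _ ≤ _ := by
          refine liminf_le_liminf ?_
          filter_upwards [eventually_gt_atTop (2 * A)] with x hx
          have := tail_mconv_ge F A x hx
          have hm : Measurable (fun y => tail F (x - y)) :=
            (tail_anti F).measurable.comp (by fun_prop)
          simp_rw [div_eq_mul_inv]
          rw [lintegral_const_mul _ (hm.mul_const _), lintegral_mul_const _ hm, ← mul_assoc]
          gcongr
  rw [phiHat, ENNReal.mul_iSup]
  refine iSup_le fun γ => ?_
  rw [ENNReal.mul_iSup]
  refine iSup_le fun hγ => ?_
  have h1 : phi F γ = ⨆ n : ℕ, ∫⁻ y in Iic (n : ℝ), ENNReal.ofReal (Real.exp (γ * y)) ∂F := by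
    rw [← setLIntegral_iUnion_of_directed]
    · have : (⋃ n : ℕ, Iic (n : ℝ)) = univ := by
        ext x; simpa using exists_nat_ge x
      rw [this, phi, Measure.restrict_univ]
    · apply Monotone.directed_le
      intro a b h
      exact Iic_subset_Iic.2 (by exact_mod_cast h)
  rw [h1, ENNReal.mul_iSup]
  exact iSup_le fun n => key γ hγ n

lemma upper_set_le (F H : Measure ℝ) (K : ℝ≥0∞) (x0 : ℝ)
    (hK : ∀ x, x0 ≤ x → K * tail F x ≤ tail H x) (S : Set ℝ) (hS : IsOpen S)
    (hup : ∀ x y, x ≤ y → x ∈ S → y ∈ S) (hS0 : S ⊆ Ioi x0) : K * F S ≤ H S := by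
  rcases S.eq_empty_or_nonempty with rfl | hne
  · simp
  have hbdd : BddBelow S := ⟨x0, fun x hx => (hS0 hx).le⟩
  have hle : x0 ≤ sInf S := le_csInf hne fun x hx => (hS0 hx).le
  have hSI : S = Ioi (sInf S) := by
    ext x
    constructor
    · intro hx
      obtain ⟨l, hl, hlS⟩ := exists_Ioc_subset_of_mem_nhds (hS.mem_nhds hx) ⟨x - 1, by linarith⟩
      have hm : (l + x) / 2 ∈ S := hlS ⟨by linarith, by linarith⟩
      have := csInf_le hbdd hm
      show sInf S < x
      linarith
    · intro hx
      obtain ⟨y, hy, hyx⟩ := exists_lt_of_csInf_lt hne hx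
      exact hup y x hyx.le hy
  rw [hSI]
  exact hK _ hle

lemma layer (F H : Measure ℝ) (K : ℝ≥0∞) (x0 : ℝ)
    (hK : ∀ x, x0 ≤ x → K * tail F x ≤ tail H x) (G : ℝ → ℝ) (hG : Continuous G)
    (hmono : Monotone G) :
    K * ∫⁻ x, ENNReal.ofReal (G x - G x0) ∂F ≤ ∫⁻ x, ENNReal.ofReal (G x - G x0) ∂H := by
  have hr : ∀ x, ENNReal.ofReal (G x - G x0) = ENNReal.ofReal (max (G x - G x0) 0) := by
    intro x; simp [ENNReal.ofReal_max]
  have hc : Continuous fun x => max (G x - G x0) 0 := by fun_prop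
  have hnn : ∀ x, 0 ≤ max (G x - G x0) 0 := fun x => le_max_right _ _
  simp_rw [hr]
  rw [lintegral_eq_lintegral_meas_lt F (Eventually.of_forall hnn)
    hc.measurable.aemeasurable,
    lintegral_eq_lintegral_meas_lt H (Eventually.of_forall hnn)
    hc.measurable.aemeasurable]
  refine (lintegral_const_mul_le _ _).trans ?_
  refine setLIntegral_mono' measurableSet_Ioi fun t ht => ?_
  have ht : 0 < t := ht
  apply upper_set_le F H K x0 hK
  · exact isOpen_lt continuous_const hc
  · intro x y hxy hx
    have hx : t < max (G x - G x0) 0 := hx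
    show t < max (G y - G x0) 0
    exact hx.trans_le (max_le_max (by linarith [hmono hxy]) le_rfl)
  · intro x hx
    have hx : t < max (G x - G x0) 0 := hx
    rcases lt_max_iff.1 hx with h | h
    · by_contra hn
      have := hmono (not_lt.1 hn)
      linarith
    · linarith

def EE (g η b x : ℝ) : ℝ := Real.exp (g * x + min (η * x) b)

def GG (g η b t x : ℝ) : ℝ := min (max x 0) t * EE g η b (max x 0)

lemma EE_pos (g η b x : ℝ) : 0 < EE g η b x := Real.exp_pos _

lemma EE_cont (g η b : ℝ) : Continuous (EE g η b) := by unfold EE; fun_prop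

lemma EE_mono (g η b : ℝ) (hg : 0 ≤ g) (hη : 0 ≤ η) : Monotone (EE g η b) := by
  intro x y h
  unfold EE
  gcongr

lemma EE_sub (g η b : ℝ) (hη : 0 ≤ η) (hb : 0 ≤ b) {x y : ℝ} (hx : 0 ≤ x) (hy : 0 ≤ y) :
    EE g η b (x + y) ≤ EE g η b x * EE g η b y := by
  unfold EE
  rw [← Real.exp_add]
  apply Real.exp_le_exp.2
  have h1 : 0 ≤ η * x := by positivity
  have h2 : 0 ≤ η * y := by positivity
  have : min (η * (x + y)) b ≤ min (η * x) b + min (η * y) b := by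
    rcases min_cases (η * (x + y)) b with h | h <;> rcases min_cases (η * x) b with h' | h' <;>
    rcases min_cases (η * y) b with h'' | h'' <;> nlinarith
  linarith

lemma GG_nonneg (g η b t x : ℝ) (ht : 0 ≤ t) : 0 ≤ GG g η b t x :=
  mul_nonneg (le_min (le_max_right _ _) ht) (EE_pos _ _ _ _).le

lemma GG_cont (g η b t : ℝ) : Continuous (GG g η b t) := by
  have := EE_cont g η b
  unfold GG; fun_prop

lemma GG_mono (g η b t : ℝ) (hg : 0 ≤ g) (hη : 0 ≤ η) (ht : 0 ≤ t) : Monotone (GG g η b t) := by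
  intro x y h
  unfold GG
  have h1 := EE_mono g η b hg hη (max_le_max h (le_refl (0 : ℝ)))
  have h2 : min (max x 0) t ≤ min (max y 0) t := min_le_min (max_le_max h le_rfl) le_rfl
  exact mul_le_mul h2 h1 (EE_pos _ _ _ _).le (le_min (le_max_right _ _) ht)

lemma GG_sub (g η b t : ℝ) (hη : 0 ≤ η) (hb : 0 ≤ b) (ht : 0 ≤ t) {x y : ℝ}
    (hx : 0 ≤ x) (hy : 0 ≤ y) :
    GG g η b t (x + y) ≤ GG g η b t x * EE g η b y + EE g η b x * GG g η b t y := by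
  unfold GG
  rw [max_eq_left hx, max_eq_left hy, max_eq_left (add_nonneg hx hy)]
  have h1 := EE_sub g η b hη hb hx hy
  have h2 : min (x + y) t ≤ min x t + min y t := by
    rcases min_cases (x + y) t with h | h <;> rcases min_cases x t with h' | h' <;>
    rcases min_cases y t with h'' | h'' <;> linarith
  have h3 : 0 ≤ min (x + y) t := le_min (add_nonneg hx hy) ht
  have h4 := (EE_pos g η b (x + y)).le
  have h5 : 0 ≤ EE g η b x * EE g η b y := (mul_pos (EE_pos _ _ _ _) (EE_pos _ _ _ _)).le
  calc _ ≤ (min x t + min y t) * (EE g η b x * EE g η b y) :=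
        mul_le_mul h2 h1 h4 (h3.trans h2)
    _ = _ := by ring

lemma main_ineq (F : Measure ℝ) [IsProbabilityMeasure F] (hsupp : F (Set.Iio 0) = 0)
    (K P : ℝ≥0∞) (x0 : ℝ) (hK : ∀ x, x0 ≤ x → K * tail F x ≤ tail (mconv F F) x)
    (g η b t : ℝ) (hg : 0 ≤ g) (hη : 0 ≤ η) (hb : 0 ≤ b) (ht : 0 ≤ t)
    (hP : ∫⁻ x, ENNReal.ofReal (EE g η b x) ∂F ≤ P) :
    K * ∫⁻ x, ENNReal.ofReal (GG g η b t x) ∂F ≤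
      2 * P * (∫⁻ x, ENNReal.ofReal (GG g η b t x) ∂F) + K * ENNReal.ofReal (GG g η b t x0) := by
  have hGm : Measurable fun x => ENNReal.ofReal (GG g η b t x) :=
    (GG_cont g η b t).measurable.ennreal_ofReal
  have hEm : Measurable fun x => ENNReal.ofReal (EE g η b x) :=
    (EE_cont g η b).measurable.ennreal_ofReal
  have h1 : ∫⁻ x, ENNReal.ofReal (GG g η b t x) ∂F ≤
      (∫⁻ x, ENNReal.ofReal (GG g η b t x - GG g η b t x0) ∂F) + ENNReal.ofReal (GG g η b t x0) := by
    calc _ ≤ ∫⁻ x, (ENNReal.ofReal (GG g η b t x - GG g η b t x0)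
              + ENNReal.ofReal (GG g η b t x0)) ∂F := by
            refine lintegral_mono fun x => ?_
            refine le_trans ?_ ENNReal.ofReal_add_le
            simp
      _ = _ := by
        rw [lintegral_add_right _ measurable_const]; simp
  have h2 := layer F (mconv F F) K x0 hK _ (GG_cont g η b t) (GG_mono g η b t hg hη ht)
  have hae := ae_nonneg_of F hsupp
  have h3 : ∫⁻ x, ENNReal.ofReal (GG g η b t x - GG g η b t x0) ∂(mconv F F) ≤
      2 * P * ∫⁻ x, ENNReal.ofReal (GG g η b t x) ∂F := by
    calc _ ≤ ∫⁻ x, ENNReal.ofReal (GG g η b t x) ∂(mconv F F) := by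
            refine lintegral_mono fun x => ENNReal.ofReal_le_ofReal ?_
            linarith [GG_nonneg g η b t x0 ht]
      _ = ∫⁻ p : ℝ × ℝ, ENNReal.ofReal (GG g η b t (p.1 + p.2)) ∂(F.prod F) := by
            rw [mconv, lintegral_map hGm (by fun_prop)]
      _ ≤ ∫⁻ p : ℝ × ℝ, (ENNReal.ofReal (GG g η b t p.1) * ENNReal.ofReal (EE g η b p.2)
            + ENNReal.ofReal (EE g η b p.1) * ENNReal.ofReal (GG g η b t p.2)) ∂(F.prod F) := by
            apply lintegral_mono_ae
            have ha : ∀ᵐ p ∂(F.prod F), 0 ≤ p.1 := Measure.quasiMeasurePreserving_fst.ae hae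
            have hb' : ∀ᵐ p ∂(F.prod F), 0 ≤ p.2 := Measure.quasiMeasurePreserving_snd.ae hae
            filter_upwards [ha, hb'] with p hp1 hp2
            rw [← ENNReal.ofReal_mul (GG_nonneg _ _ _ _ _ ht),
              ← ENNReal.ofReal_mul (EE_pos _ _ _ _).le, ← ENNReal.ofReal_add
              (mul_nonneg (GG_nonneg _ _ _ _ _ ht) (EE_pos _ _ _ _).le)
              (mul_nonneg (EE_pos _ _ _ _).le (GG_nonneg _ _ _ _ _ ht))]
            exact ENNReal.ofReal_le_ofReal (GG_sub g η b t hη hb ht hp1 hp2)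
      _ = (∫⁻ x, ENNReal.ofReal (GG g η b t x) ∂F) * (∫⁻ x, ENNReal.ofReal (EE g η b x) ∂F)
          + (∫⁻ x, ENNReal.ofReal (EE g η b x) ∂F) * (∫⁻ x, ENNReal.ofReal (GG g η b t x) ∂F) := by
            have hmm : Measurable fun p : ℝ × ℝ =>
                ENNReal.ofReal (GG g η b t p.1) * ENNReal.ofReal (EE g η b p.2) :=
              (hGm.comp measurable_fst).mul (hEm.comp measurable_snd)
            rw [lintegral_add_left hmm,
              lintegral_prod_mul hGm.aemeasurable hEm.aemeasurable,
              lintegral_prod_mul hEm.aemeasurable hGm.aemeasurable]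
      _ = 2 * (∫⁻ x, ENNReal.ofReal (EE g η b x) ∂F) * (∫⁻ x, ENNReal.ofReal (GG g η b t x) ∂F) := by
            ring
      _ ≤ _ := by gcongr
  calc _ ≤ K * ((∫⁻ x, ENNReal.ofReal (GG g η b t x - GG g η b t x0) ∂F)
            + ENNReal.ofReal (GG g η b t x0)) := by gcongr
    _ = K * (∫⁻ x, ENNReal.ofReal (GG g η b t x - GG g η b t x0) ∂F)
            + K * ENNReal.ofReal (GG g η b t x0) := by rw [mul_add]
    _ ≤ _ := add_le_add (h2.trans h3) le_rfl

lemma gammaHat_ne_top (F : Measure ℝ) (hub : ∀ x : ℝ, tail F x ≠ 0)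
    (hfin : phiHat F ≠ ⊤) : gammaHat F ≠ ⊤ := by
  intro htop
  obtain ⟨n, hn⟩ := ENNReal.exists_nat_mul_gt (hub 1) hfin
  have h1 : phi F n ≤ phiHat F :=
    le_iSup₂ (f := fun (γ : ℝ) (_ : ENNReal.ofReal γ < gammaHat F ∨ γ < 0) => phi F γ) (n : ℝ)
      (Or.inl (by rw [htop]; exact ENNReal.ofReal_lt_top))
  have h2 : (n : ℝ≥0∞) * tail F 1 ≤ phi F n := by
    rw [tail, phi, ← setLIntegral_const]
    refine le_trans (setLIntegral_mono' measurableSet_Ioi fun x hx => ?_)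
      (setLIntegral_le_lintegral (Ioi 1) _)
    have hx : (1 : ℝ) < x := hx
    rw [← ENNReal.ofReal_natCast]
    apply ENNReal.ofReal_le_ofReal
    have := Real.add_one_le_exp ((n : ℝ) * x)
    have : (n : ℝ) * 1 ≤ n * x := by gcongr
    linarith
  exact absurd (hn.trans_le (h2.trans h1)) (lt_irrefl _)

lemma phi_le_phiHat (F : Measure ℝ) (g : ℝ) (hg : 0 < g) (hgh : gammaHat F = ENNReal.ofReal g) :
    phi F g ≤ phiHat F := by
  have hm : ∀ γ : ℝ, Measurable fun x : ℝ => ENNReal.ofReal (Real.exp (γ * x)) := by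
    intro γ; fun_prop
  have h1 := lintegral_liminf_le (μ := F) (u := 𝓝[<] g) hm
  have h2 : ∀ x : ℝ, liminf (fun γ => ENNReal.ofReal (Real.exp (γ * x))) (𝓝[<] g)
      = ENNReal.ofReal (Real.exp (g * x)) := by
    intro x
    apply Tendsto.liminf_eq
    have : Continuous fun γ : ℝ => ENNReal.ofReal (Real.exp (γ * x)) :=
      ENNReal.continuous_ofReal.comp (by fun_prop)
    exact (this.tendsto g).mono_left nhdsWithin_le_nhds
  simp_rw [h2] at h1
  refine h1.trans ?_
  refine liminf_le_of_frequently_le' ?_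
  apply Eventually.frequently
  filter_upwards [self_mem_nhdsWithin] with γ hγ
  refine le_iSup₂ (f := fun (γ : ℝ) (_ : ENNReal.ofReal γ < gammaHat F ∨ γ < 0) => phi F γ) γ
      (Or.inl ?_)
  rw [hgh]
  exact (ENNReal.ofReal_lt_ofReal_iff hg).2 hγ

lemma phi_top (F : Measure ℝ) (g η : ℝ) (hg : 0 < g) (hη : 0 < η)
    (hgh : gammaHat F = ENNReal.ofReal g) : phi F (g + η) = ⊤ := by
  by_contra h
  have h1 : ENNReal.ofReal (g + η) ≤ gammaHat F := le_sSup ⟨g + η, rfl, Ne.lt_top h⟩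
  rw [hgh, ENNReal.ofReal_le_ofReal_iff hg.le] at h1
  linarith

/-- choice of the truncation level. -/
lemma exists_b (F : Measure ℝ) (g η : ℝ) (p ε : ℝ) (hp : 0 ≤ p) (hε : 0 < ε)
    (hphi : phi F g ≤ ENNReal.ofReal p) (htop : phi F (g + η) = ⊤) :
    ∃ b : ℝ, 0 ≤ b ∧ ENNReal.ofReal (p + ε / 2) < ∫⁻ x, ENNReal.ofReal (EE g η b x) ∂F ∧
      ∫⁻ x, ENNReal.ofReal (EE g η b x) ∂F ≤ ENNReal.ofReal (p + ε) := by
  have hm : ∀ b, Measurable fun x => ENNReal.ofReal (EE g η b x) :=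
    fun b => (EE_cont g η b).measurable.ennreal_ofReal
  set s : ℝ := Real.log ((p + ε) / (p + ε / 2)) with hs
  have hq : 1 < (p + ε) / (p + ε / 2) := by
    rw [one_lt_div (by positivity)]; linarith
  have hspos : 0 < s := Real.log_pos hq
  have hes : Real.exp s * (p + ε / 2) = p + ε := by
    rw [hs, Real.exp_log (by positivity)]; field_simp
  have hex : ∃ n : ℕ, ENNReal.ofReal (p + ε / 2) <
      ∫⁻ x, ENNReal.ofReal (EE g η (n * s) x) ∂F := by
    by_contra hcon
    push Not at hcon
    have h1 := lintegral_liminf_le (μ := F) (u := atTop) fun n : ℕ => hm (n * s)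
    have h2 : ∀ x : ℝ, liminf (fun n : ℕ => ENNReal.ofReal (EE g η (n * s) x)) atTop
        = ENNReal.ofReal (Real.exp ((g + η) * x)) := by
      intro x
      apply Tendsto.liminf_eq
      apply tendsto_const_nhds.congr'
      obtain ⟨N, hN⟩ := exists_nat_ge (η * x / s)
      filter_upwards [eventually_ge_atTop N] with n hn
      have : η * x ≤ n * s := by
        rw [div_le_iff₀ hspos] at hN
        refine hN.trans ?_
        gcongr
      rw [EE, min_eq_left this]; ring_nf
    simp_rw [h2] at h1
    have h3 : phi F (g + η) ≤ ENNReal.ofReal (p + ε / 2) :=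
      h1.trans (liminf_le_of_frequently_le' (Eventually.of_forall hcon).frequently)
    rw [htop] at h3
    exact ENNReal.ofReal_ne_top (top_le_iff.1 h3)
  classical
  have hn := Nat.find_spec hex
  refine ⟨Nat.find hex * s, by positivity, hn, ?_⟩
  rcases Nat.eq_zero_or_pos (Nat.find hex) with h0 | h0
  · rw [h0]
    calc _ ≤ phi F g := by
          refine lintegral_mono fun x => ENNReal.ofReal_le_ofReal ?_
          unfold EE
          apply Real.exp_le_exp.2
          have : min (η * x) ((0 : ℕ) * s) ≤ 0 := (min_le_right _ _).trans (by simp)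
          linarith
      _ ≤ ENNReal.ofReal p := hphi
      _ ≤ _ := ENNReal.ofReal_le_ofReal (by linarith)
  · obtain ⟨m, hmm⟩ := Nat.exists_eq_succ_of_ne_zero h0.ne'
    have hlt := not_lt.1 (Nat.find_min hex (m := m) (by omega))
    rw [hmm]
    calc _ ≤ ∫⁻ x, ENNReal.ofReal (Real.exp s) * ENNReal.ofReal (EE g η (m * s) x) ∂F := by
          refine lintegral_mono fun x => ?_
          rw [← ENNReal.ofReal_mul (Real.exp_pos _).le]
          apply ENNReal.ofReal_le_ofReal
          unfold EE
          rw [← Real.exp_add]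
          apply Real.exp_le_exp.2
          push_cast
          rcases min_cases (η * x) ((m + 1) * s) with h | h <;>
          rcases min_cases (η * x) (m * s) with h' | h' <;> nlinarith
      _ = ENNReal.ofReal (Real.exp s) * ∫⁻ x, ENNReal.ofReal (EE g η (m * s) x) ∂F :=
          lintegral_const_mul _ (hm _)
      _ ≤ ENNReal.ofReal (Real.exp s) * ENNReal.ofReal (p + ε / 2) := by gcongr
      _ = _ := by rw [← ENNReal.ofReal_mul (Real.exp_pos _).le, hes]

lemma EE_le (g η b : ℝ) (hη : 0 ≤ η) (hb : 0 ≤ b) {x : ℝ} (hx : 0 ≤ x) :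
    EE g η b x ≤ Real.exp (g * x) + η * (x * EE g η b x) := by
  unfold EE
  set m := min (η * x) b with hm
  have hm0 : 0 ≤ m := le_min (by positivity) hb
  have hmx : m ≤ η * x := min_le_left _ _
  rw [Real.exp_add]
  have h1 : Real.exp m * (1 - m) ≤ 1 := by
    have := Real.add_one_le_exp (-m)
    calc Real.exp m * (1 - m) ≤ Real.exp m * Real.exp (-m) := by gcongr; linarith
      _ = 1 := by rw [← Real.exp_add]; simp
  have h2 : m * Real.exp m ≤ η * x * Real.exp m := by gcongr
  have h3 : Real.exp m ≤ 1 + η * x * Real.exp m := by nlinarith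
  have := mul_le_mul_of_nonneg_left h3 (Real.exp_pos (g * x)).le
  nlinarith

lemma upper_bound (F : Measure ℝ) [IsProbabilityMeasure F]
    (hsupp : F (Set.Iio 0) = 0) (hub : ∀ x : ℝ, tail F x ≠ 0) (hγ : 0 < gammaHat F) :
    liminf (fun x : ℝ => tail (mconv F F) x / tail F x) atTop ≤ 2 * phiHat F := by
  by_contra hcon
  rw [not_le] at hcon
  have hfin : phiHat F ≠ ⊤ := by
    intro h; rw [h] at hcon; simp at hcon
  have hgt := gammaHat_ne_top F hub hfin
  set g := (gammaHat F).toReal with hgdef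
  have hgh : gammaHat F = ENNReal.ofReal g := (ENNReal.ofReal_toReal hgt).symm
  have hg : 0 < g := ENNReal.toReal_pos hγ.ne' hgt
  obtain ⟨K, hK1, hK2⟩ := exists_between hcon
  have hKtop : K ≠ ⊤ := (hK2.trans_le le_top).ne
  have hev := eventually_lt_of_lt_liminf hK2
  obtain ⟨x1, hx1⟩ := eventually_atTop.1 hev
  set x0 := max x1 0 with hx0
  have hx0n : 0 ≤ x0 := le_max_right _ _
  have hK : ∀ x, x0 ≤ x → K * tail F x ≤ tail (mconv F F) x := by
    intro x hx
    have := (hx1 x ((le_max_left _ _).trans hx)).le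
    rwa [ENNReal.le_div_iff_mul_le (Or.inl (hub x)) (Or.inl (tail_ne_top F x))] at this
  set p := (phiHat F).toReal with hpdef
  set k := K.toReal with hkdef
  have hp0 : 0 ≤ p := ENNReal.toReal_nonneg
  have hpe : phiHat F = ENNReal.ofReal p := (ENNReal.ofReal_toReal hfin).symm
  have hke : K = ENNReal.ofReal k := (ENNReal.ofReal_toReal hKtop).symm
  have hk0 : 0 ≤ k := ENNReal.toReal_nonneg
  have hpk : 2 * p < k := by
    have := (ENNReal.toReal_lt_toReal (ENNReal.mul_ne_top (by simp) hfin) hKtop).2 hK1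
    simpa [ENNReal.toReal_mul] using this
  obtain ⟨ε, hεdef⟩ : ∃ ε, ε = (k - 2 * p) / 4 := ⟨_, rfl⟩
  have hε : 0 < ε := by rw [hεdef]; linarith
  have hphi : phi F g ≤ ENNReal.ofReal p := hpe ▸ phi_le_phiHat F g hg hgh
  obtain ⟨c, hc⟩ : ∃ c, c = x0 * Real.exp ((g + 1) * x0) := ⟨_, rfl⟩
  have hc0 : 0 ≤ c := by rw [hc]; positivity
  obtain ⟨C, hC⟩ : ∃ C, C = k * c / (2 * ε) := ⟨_, rfl⟩
  have hC0 : 0 ≤ C := by rw [hC]; positivity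
  obtain ⟨η, hηdef⟩ : ∃ η, η = min 1 (ε / (2 * (C + 1))) := ⟨_, rfl⟩
  have hη : 0 < η := by rw [hηdef]; exact lt_min one_pos (by positivity)
  have hη1 : η ≤ 1 := by rw [hηdef]; exact min_le_left _ _
  have hηC : η * C < ε / 2 := by
    have h1 : η ≤ ε / (2 * (C + 1)) := by rw [hηdef]; exact min_le_right _ _
    rw [le_div_iff₀ (by positivity)] at h1
    nlinarith
  obtain ⟨b, hb0, hbl, hbu⟩ := exists_b F g η p ε hp0 hε hphi (phi_top F g η hg hη hgh)
  have hEm : Measurable fun x => ENNReal.ofReal (EE g η b x) :=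
    (EE_cont g η b).measurable.ennreal_ofReal
  have hae := ae_nonneg_of F hsupp
  -- uniform bound for the truncated integrals
  have hI : ∀ n : ℕ, ∫⁻ x, ENNReal.ofReal (GG g η b n x) ∂F ≤ ENNReal.ofReal C := by
    intro n
    have hn0 : (0 : ℝ) ≤ n := n.cast_nonneg
    have hmain := main_ineq F hsupp K _ x0 hK g η b n hg.le hη.le hb0 hn0 hbu
    have hIfin : ∫⁻ x, ENNReal.ofReal (GG g η b n x) ∂F ≠ ⊤ := by
      have : ∫⁻ x, ENNReal.ofReal (GG g η b n x) ∂F ≤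
          ENNReal.ofReal n * ENNReal.ofReal (p + ε) := by
        calc _ ≤ ∫⁻ x, ENNReal.ofReal n * ENNReal.ofReal (EE g η b x) ∂F := by
              apply lintegral_mono_ae
              filter_upwards [hae] with x hx
              rw [← ENNReal.ofReal_mul hn0]
              apply ENNReal.ofReal_le_ofReal
              unfold GG
              rw [max_eq_left hx]
              exact mul_le_mul_of_nonneg_right (min_le_right _ _) (EE_pos _ _ _ _).le
          _ = ENNReal.ofReal n * ∫⁻ x, ENNReal.ofReal (EE g η b x) ∂F :=
              lintegral_const_mul _ hEm
          _ ≤ _ := by gcongr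
      exact ne_top_of_le_ne_top (ENNReal.mul_ne_top ENNReal.ofReal_ne_top ENNReal.ofReal_ne_top) this
    set I := (∫⁻ x, ENNReal.ofReal (GG g η b n x) ∂F).toReal with hIdef
    have hIe : ∫⁻ x, ENNReal.ofReal (GG g η b n x) ∂F = ENNReal.ofReal I :=
      (ENNReal.ofReal_toReal hIfin).symm
    have hI0 : 0 ≤ I := ENNReal.toReal_nonneg
    have hG0 := GG_nonneg g η b n x0 hn0
    have hGc : GG g η b n x0 ≤ c := by
      unfold GG
      rw [max_eq_left hx0n, hc]
      refine mul_le_mul (min_le_left _ _) ?_ (EE_pos _ _ _ _).le hx0n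
      unfold EE
      apply Real.exp_le_exp.2
      have h1 : min (η * x0) b ≤ η * x0 := min_le_left _ _
      have h2 : η * x0 ≤ 1 * x0 := by gcongr
      linarith
    rw [hIe, hke] at hmain
    have h2 : (2 : ℝ≥0∞) = ENNReal.ofReal 2 := by simp
    rw [h2, ← ENNReal.ofReal_mul (p := 2) (by norm_num), ← ENNReal.ofReal_mul hk0,
      ← ENNReal.ofReal_mul hk0, ← ENNReal.ofReal_mul (p := 2 * (p + ε)) (by positivity),
      ← ENNReal.ofReal_add (by positivity) (by positivity),
      ENNReal.ofReal_le_ofReal_iff (by positivity)] at hmain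
    rw [hIe]
    apply ENNReal.ofReal_le_ofReal
    rw [hC, le_div_iff₀ (by positivity)]
    have h3 : k * GG g η b n x0 ≤ k * c := by gcongr
    have h4 : k = 2 * (p + ε) + 2 * ε := by rw [hεdef]; ring
    have h5 : k * I = 2 * (p + ε) * I + 2 * ε * I := by rw [h4]; ring
    linarith
  have hJ : ∫⁻ x, ENNReal.ofReal (max x 0 * EE g η b (max x 0)) ∂F ≤ ENNReal.ofReal C := by
    have h1 := lintegral_liminf_le (μ := F) (u := atTop)
      fun n : ℕ => (GG_cont g η b n).measurable.ennreal_ofReal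
    have h2 : ∀ x : ℝ, liminf (fun n : ℕ => ENNReal.ofReal (GG g η b n x)) atTop
        = ENNReal.ofReal (max x 0 * EE g η b (max x 0)) := by
      intro x
      apply Tendsto.liminf_eq
      apply tendsto_const_nhds.congr'
      obtain ⟨N, hN⟩ := exists_nat_ge (max x 0)
      filter_upwards [eventually_ge_atTop N] with n hn
      have : max x 0 ≤ n := hN.trans (by exact_mod_cast hn)
      rw [GG, min_eq_left this]
    simp_rw [h2] at h1
    exact h1.trans (liminf_le_of_frequently_le' (Eventually.of_forall hI).frequently)
  have hfinal : ∫⁻ x, ENNReal.ofReal (EE g η b x) ∂F ≤ ENNReal.ofReal (p + η * C) := by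
    have hm1 : Measurable fun x : ℝ => ENNReal.ofReal (max x 0 * EE g η b (max x 0)) := by
      have := EE_cont g η b
      have : Continuous fun x : ℝ => max x 0 * EE g η b (max x 0) := by fun_prop
      exact this.measurable.ennreal_ofReal
    calc _ ≤ ∫⁻ x, (ENNReal.ofReal (Real.exp (g * x)) + ENNReal.ofReal η *
            ENNReal.ofReal (max x 0 * EE g η b (max x 0))) ∂F := by
          apply lintegral_mono_ae
          filter_upwards [hae] with x hx
          rw [max_eq_left hx, ← ENNReal.ofReal_mul hη.le, ← ENNReal.ofReal_add (Real.exp_pos _).le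
            (mul_nonneg hη.le (mul_nonneg hx (EE_pos _ _ _ _).le))]
          exact ENNReal.ofReal_le_ofReal (EE_le g η b hη.le hb0 hx)
      _ = phi F g + ENNReal.ofReal η *
            ∫⁻ x, ENNReal.ofReal (max x 0 * EE g η b (max x 0)) ∂F := by
          rw [lintegral_add_left (by fun_prop), lintegral_const_mul _ hm1, phi]
      _ ≤ ENNReal.ofReal p + ENNReal.ofReal η * ENNReal.ofReal C := by gcongr
      _ = _ := by
          rw [← ENNReal.ofReal_mul hη.le, ← ENNReal.ofReal_add hp0 (by positivity)]
  have := hbl.trans_le hfinal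
  rw [ENNReal.ofReal_lt_ofReal_iff_of_nonneg (by positivity)] at this
  linarith

/-- Theorem 2: if γ̂ > 0 and liminf F̄(x−y)/F̄(x) ≥ e^{γ̂y} for all y > 0,
then liminf (F*F)‾(x)/F̄(x) = 2φ(γ̂). -/
theorem stmt3 (F : MeasureTheory.Measure ℝ) [MeasureTheory.IsProbabilityMeasure F]
    (hsupp : F (Set.Iio 0) = 0) (hub : ∀ x : ℝ, tail F x ≠ 0)
    (hγ : 0 < gammaHat F)
    (hins : ∀ y : ℝ, 0 < y →
      expGammaHat F y ≤ liminf (fun x : ℝ => tail F (x - y) / tail F x) atTop) :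
    liminf (fun x : ℝ => tail (mconv F F) x / tail F x) atTop = 2 * phiHat F := by
  exact le_antisymm (upper_bound F hsupp hub hγ) (lower_bound F hsupp hub hins)
end
end

section
/- Let F be a distribution on [0,∞) with 0 < γ̂ < ∞ and φ(γ̂) < ∞. Then liminf_{x→∞} (F*F)‾(x)/F̄(x) ≤ 2φ(γ̂) and limsup_{x→∞} (F*F)‾(x)/F̄(x) ≥ 2φ(γ̂). -/
open MeasureTheory Filter Real Set
open scoped ENNReal Topology

noncomputable section

/-- The truncated weight. -/
def ww (γ δ q x : ℝ) : ℝ := Real.exp (γ * x) * min (Real.exp (δ * x)) q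

/-- The test function. -/
def ff (γ δ q M x : ℝ) : ℝ := min (max x 0) M * ww γ δ q x

lemma ww_cont (γ δ q : ℝ) : Continuous (ww γ δ q) := by unfold ww; fun_prop

lemma ff_cont (γ δ q M : ℝ) : Continuous (ff γ δ q M) := by
  have := ww_cont γ δ q
  unfold ff; fun_prop

lemma ww_nonneg {γ δ q : ℝ} (hq : 1 ≤ q) (x : ℝ) : 0 ≤ ww γ δ q x := by
  unfold ww; positivity

lemma ff_nonneg {γ δ q M : ℝ} (hq : 1 ≤ q) (hM : 0 ≤ M) (x : ℝ) : 0 ≤ ff γ δ q M x := by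
  have := ww_nonneg (γ := γ) (δ := δ) hq x
  unfold ff; positivity

lemma min_exp_mono {δ q : ℝ} (hδ : 0 < δ) :
    Monotone (fun x : ℝ => min (Real.exp (δ * x)) q) := by
  intro x y hxy
  have : Real.exp (δ * x) ≤ Real.exp (δ * y) := by gcongr
  exact min_le_min this le_rfl

lemma gg_mono {δ q M : ℝ} (hδ : 0 < δ) (hq : 1 ≤ q) (hM : 0 ≤ M) :
    Monotone (fun x : ℝ => min (max x 0) M * min (Real.exp (δ * x)) q) := by
  intro x y hxy
  apply mul_le_mul
  · exact min_le_min (max_le_max hxy le_rfl) le_rfl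
  · exact min_exp_mono hδ hxy
  · positivity
  · positivity

lemma ff_eq (γ δ q M x : ℝ) : ff γ δ q M x =
    Real.exp (γ * x) * (min (max x 0) M * min (Real.exp (δ * x)) q) := by
  unfold ff ww; ring

lemma ff_mono {γ δ q M : ℝ} (hγ : 0 < γ) (hδ : 0 < δ) (hq : 1 ≤ q) (hM : 0 ≤ M) :
    Monotone (ff γ δ q M) := by
  intro x y hxy
  rw [ff_eq, ff_eq]
  apply mul_le_mul
  · gcongr
  · exact gg_mono hδ hq hM hxy
  · positivity
  · positivity

lemma ww_submul {γ δ q x y : ℝ} (hδ : 0 < δ) (hq : 1 ≤ q) (hx : 0 ≤ x) (hy : 0 ≤ y) :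
    ww γ δ q (x + y) ≤ ww γ δ q x * ww γ δ q y := by
  unfold ww
  have h1 : min (Real.exp (δ * (x + y))) q ≤
      min (Real.exp (δ * x)) q * min (Real.exp (δ * y)) q := by
    have ex : 1 ≤ Real.exp (δ * x) := Real.one_le_exp (by positivity)
    have ey : 1 ≤ Real.exp (δ * y) := Real.one_le_exp (by positivity)
    rw [mul_add, Real.exp_add]
    rcases min_cases (Real.exp (δ * x)) q with ⟨h, h'⟩ | ⟨h, h'⟩ <;>
    rcases min_cases (Real.exp (δ * y)) q with ⟨k, k'⟩ | ⟨k, k'⟩ <;>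
    rw [h, k]
    · exact min_le_left _ _
    · exact (min_le_right _ _).trans (by nlinarith)
    · exact (min_le_right _ _).trans (by nlinarith)
    · exact (min_le_right _ _).trans (by nlinarith)
  calc _ ≤ Real.exp (γ * (x + y)) *
      (min (Real.exp (δ * x)) q * min (Real.exp (δ * y)) q) := by gcongr
    _ = _ := by rw [mul_add, Real.exp_add]; ring

lemma ff_sub {γ δ q M x y : ℝ} (hδ : 0 < δ) (hq : 1 ≤ q) (hM : 0 ≤ M)
    (hx : 0 ≤ x) (hy : 0 ≤ y) :
    ff γ δ q M (x + y) ≤ ff γ δ q M x * ww γ δ q y + ww γ δ q x * ff γ δ q M y := by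
  unfold ff
  have h1 : min (max (x + y) 0) M ≤ min (max x 0) M + min (max y 0) M := by
    rw [max_eq_left hx, max_eq_left hy, max_eq_left (add_nonneg hx hy)]
    rcases min_cases x M with ⟨h, h'⟩ | ⟨h, h'⟩ <;>
    rcases min_cases y M with ⟨k, k'⟩ | ⟨k, k'⟩ <;>
    rw [h, k]
    · exact min_le_left _ _
    · exact (min_le_right _ _).trans (by linarith)
    · exact (min_le_right _ _).trans (by linarith)
    · exact (min_le_right _ _).trans (by linarith)
  calc _ ≤ (min (max x 0) M + min (max y 0) M) * (ww γ δ q x * ww γ δ q y) := by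
        apply mul_le_mul h1 (ww_submul hδ hq hx hy) (ww_nonneg hq _)
        positivity
    _ = _ := by ring

lemma ff_super {γ δ q M x y : ℝ} (hδ : 0 < δ) (hq : 1 ≤ q) (hM : 0 ≤ M)
    (hy : 0 ≤ y) :
    ff γ δ q M x * Real.exp (γ * y) ≤ ff γ δ q M (x + y) := by
  rw [ff_eq, ff_eq, mul_add, Real.exp_add]
  have := gg_mono hδ hq hM (show x ≤ x + y by linarith)
  simp only at this
  calc _ = Real.exp (γ * x) * Real.exp (γ * y) *
        (min (max x 0) M * min (Real.exp (δ * x)) q) := by ring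
    _ ≤ _ := by gcongr

lemma ff_le {γ δ q M A x : ℝ} (hγ : 0 < γ) (hδ : 0 < δ) (hδ1 : δ ≤ 1) (hq : 1 ≤ q) (hM : 0 ≤ M)
    (hA : 0 ≤ A) (hx : x ≤ A) : ff γ δ q M x ≤ Real.exp (γ * A) * (A * Real.exp A) := by
  refine (ff_mono hγ hδ hq hM hx).trans ?_
  rw [ff_eq]
  have : δ * A ≤ A := by nlinarith
  have h2 : min (Real.exp (δ * A)) q ≤ Real.exp A :=
    (min_le_left _ _).trans (Real.exp_le_exp.2 this)
  have h3 : min (max A 0) M ≤ A := by rw [max_eq_left hA]; exact min_le_left _ _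
  gcongr

lemma open_upper {S : Set ℝ} {x0 : ℝ} (ho : IsOpen S) (hu : ∀ x ∈ S, ∀ y, x ≤ y → y ∈ S)
    (hs : S ⊆ Ioi x0) : S = ∅ ∨ ∃ y, x0 ≤ y ∧ S = Ioi y := by
  rcases S.eq_empty_or_nonempty with h | h
  · exact Or.inl h
  right
  have hb : BddBelow S := ⟨x0, fun x hx => (hs hx).le⟩
  refine ⟨sInf S, le_csInf h fun x hx => (hs hx).le, ?_⟩
  ext z
  constructor
  · intro hz
    rcases Metric.isOpen_iff.1 ho z hz with ⟨e, he, hball⟩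
    have : z - e / 2 ∈ S := hball (by
      rw [Metric.mem_ball, Real.dist_eq, abs_lt]; constructor <;> linarith)
    have := csInf_le hb this
    simp only [mem_Ioi]; linarith
  · intro hz
    obtain ⟨w, hw, hwz⟩ := exists_lt_of_csInf_lt h hz
    exact hu w hw z hwz.le

lemma tail_cmp {μ ν : Measure ℝ} {x0 : ℝ} (h : ∀ x, x0 ≤ x → μ (Ioi x) ≤ ν (Ioi x))
    {f : ℝ → ℝ} (hc : Continuous f) (hm : Monotone f) (h0 : ∀ x, 0 ≤ f x) :
    ∫⁻ x in Ioi x0, ENNReal.ofReal (f x) ∂μ ≤ ∫⁻ x in Ioi x0, ENNReal.ofReal (f x) ∂ν := by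
  rw [lintegral_eq_lintegral_meas_lt _ (ae_of_all _ h0) hc.measurable.aemeasurable,
    lintegral_eq_lintegral_meas_lt _ (ae_of_all _ h0) hc.measurable.aemeasurable]
  apply lintegral_mono
  intro t
  have ho : IsOpen {a : ℝ | t < f a} := isOpen_lt continuous_const hc
  simp only
  rw [Measure.restrict_apply ho.measurableSet, Measure.restrict_apply ho.measurableSet]
  rcases open_upper (S := {a : ℝ | t < f a} ∩ Ioi x0) (x0 := x0) (ho.inter isOpen_Ioi)
    (fun x hx y hxy => ⟨lt_of_lt_of_le hx.1 (hm hxy), lt_of_lt_of_le hx.2 hxy⟩)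
    inter_subset_right with h1 | ⟨y, hy, h1⟩
  · simp [h1]
  · rw [h1]; exact h y hy

lemma lint_conv (F : Measure ℝ) [IsProbabilityMeasure F] {f : ℝ → ℝ≥0∞} (hf : Measurable f) :
    ∫⁻ x, f x ∂(mconv F F) = ∫⁻ p, f (p.1 + p.2) ∂(F.prod F) := by
  unfold mconv
  rw [lintegral_map hf (by fun_prop)]

lemma lint_sym (F : Measure ℝ) [IsProbabilityMeasure F] {U V : ℝ → ℝ≥0∞}
    (hU : Measurable U) (hV : Measurable V) :
    ∫⁻ p : ℝ × ℝ, (U p.1 * V p.2 + V p.1 * U p.2) ∂(F.prod F)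
      = 2 * ((∫⁻ x, U x ∂F) * ∫⁻ x, V x ∂F) := by
  rw [lintegral_add_left (by fun_prop), lintegral_prod_mul hU.aemeasurable hV.aemeasurable,
    lintegral_prod_mul hV.aemeasurable hU.aemeasurable]
  ring

lemma ae_nonneg (F : Measure ℝ) (hsupp : F (Set.Iio 0) = 0) : ∀ᵐ x ∂F, 0 ≤ x := by
  rw [ae_iff]; simpa [Set.Iio] using hsupp

lemma ae_prod_nonneg (F : Measure ℝ) [IsProbabilityMeasure F] (hsupp : F (Set.Iio 0) = 0) :
    ∀ᵐ p ∂(F.prod F), 0 ≤ p.1 ∧ 0 ≤ p.2 := by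
  have h := ae_nonneg F hsupp
  have h1 := Measure.quasiMeasurePreserving_fst (μ := F) (ν := F) |>.ae h
  have h2 := Measure.quasiMeasurePreserving_snd (μ := F) (ν := F) |>.ae h
  filter_upwards [h1, h2] with p a b using ⟨a, b⟩

lemma phi_top_s10 (F : Measure ℝ) {γ δ : ℝ} (hγ : 0 < γ) (hδ : 0 < δ)
    (h : ENNReal.ofReal γ = gammaHat F) : phi F (γ + δ) = ⊤ := by
  by_contra hne
  have : ENNReal.ofReal (γ + δ) ≤ gammaHat F :=
    le_sSup ⟨γ + δ, rfl, lt_top_iff_ne_top.2 hne⟩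
  rw [← h, ENNReal.ofReal_le_ofReal_iff hγ.le] at this
  linarith

lemma exists_large_q (F : Measure ℝ) {γ δ r B : ℝ} (hr : 1 < r)
    (h : phi F (γ + δ) = ⊤) :
    ∃ n : ℕ, ENNReal.ofReal B < ∫⁻ x, ENNReal.ofReal (ww γ δ (r ^ n) x) ∂F := by
  by_contra! hcon
  have hsup := lintegral_iSup (μ := F) (f := fun n x => ENNReal.ofReal (ww γ δ (r ^ n) x))
    (fun n => (ww_cont γ δ _).measurable.ennreal_ofReal)
    (by
      intro n m hnm x
      apply ENNReal.ofReal_le_ofReal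
      unfold ww
      have : r ^ n ≤ r ^ m := pow_le_pow_right₀ hr.le hnm
      gcongr)
  have h2 : phi F (γ + δ) ≤ ∫⁻ x, ⨆ n, ENNReal.ofReal (ww γ δ (r ^ n) x) ∂F := by
    apply lintegral_mono
    intro x
    obtain ⟨n, hn⟩ := pow_unbounded_of_one_lt (Real.exp (δ * x)) hr
    refine le_trans ?_ (le_iSup _ n)
    unfold ww
    rw [min_eq_left hn.le, ← Real.exp_add, ← add_mul]
  rw [h, hsup] at h2
  have h3 : ⨆ n, ∫⁻ x, ENNReal.ofReal (ww γ δ (r ^ n) x) ∂F ≤ ENNReal.ofReal B := iSup_le hcon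
  exact absurd (h2.trans h3) (by simp)

lemma ww_scale (F : Measure ℝ) {γ δ r q : ℝ} (hr : 1 ≤ r) :
    ∫⁻ x, ENNReal.ofReal (ww γ δ (q * r) x) ∂F ≤
      ENNReal.ofReal r * ∫⁻ x, ENNReal.ofReal (ww γ δ q x) ∂F := by
  rw [← lintegral_const_mul _ (ww_cont γ δ _).measurable.ennreal_ofReal]
  apply lintegral_mono
  intro x
  simp only
  rw [← ENNReal.ofReal_mul (by linarith)]
  apply ENNReal.ofReal_le_ofReal
  unfold ww
  have : min (Real.exp (δ * x)) (q * r) ≤ r * min (Real.exp (δ * x)) q := by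
    have := Real.exp_pos (δ * x)
    rcases min_cases (Real.exp (δ * x)) q with ⟨h, h'⟩ | ⟨h, h'⟩ <;> rw [h]
    · exact (min_le_left _ _).trans (by nlinarith)
    · exact (min_le_right _ _).trans (by linarith)
  calc _ ≤ Real.exp (γ * x) * (r * min (Real.exp (δ * x)) q) := by gcongr
    _ = _ := by ring

lemma key (F : Measure ℝ) [IsProbabilityMeasure F]
    {γ p : ℝ} (hγ : 0 < γ) (hp : 0 ≤ p)
    (hγhat : ENNReal.ofReal γ = gammaHat F)
    (hφ : phi F γ = ENNReal.ofReal p) {ε N : ℝ} (hε : 0 < ε) (hN : 0 ≤ N) :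
    ∃ δ q M : ℝ, 0 < δ ∧ δ ≤ 1 ∧ 1 ≤ q ∧ 0 ≤ M ∧
      ∫⁻ x, ENNReal.ofReal (ww γ δ q x) ∂F ≤ ENNReal.ofReal (p + ε) ∧
      ENNReal.ofReal N ≤ ∫⁻ x, ENNReal.ofReal (ff γ δ q M x) ∂F := by
  set M : ℝ := 4 * N / ε with hMdef
  have hM : 0 ≤ M := by positivity
  obtain ⟨δ, hδ, hδ1, hδM⟩ : ∃ δ : ℝ, 0 < δ ∧ δ ≤ 1 ∧ p * Real.exp (δ * M) < p + ε / 4 := by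
    have hc : Tendsto (fun δ : ℝ => p * Real.exp (δ * M)) (𝓝[>] 0) (𝓝 (p * Real.exp (0 * M))) :=
      ((by fun_prop : Continuous (fun δ : ℝ => p * Real.exp (δ * M))).tendsto 0).mono_left
        nhdsWithin_le_nhds
    have h1 := hc.eventually (gt_mem_nhds (show p * Real.exp (0 * M) < p + ε / 4 by
      simp; linarith))
    have h2 : ∀ᶠ δ : ℝ in 𝓝[>] 0, δ ∈ Ioc (0 : ℝ) 1 := Ioc_mem_nhdsGT one_pos
    obtain ⟨δ, a, b⟩ := (h1.and h2).exists
    exact ⟨δ, b.1, b.2, a⟩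
  set r : ℝ := (p + ε) / (p + ε / 2) with hrdef
  have hpos : 0 < p + ε / 2 := by linarith
  have hr : 1 < r := by rw [hrdef, one_lt_div hpos]; linarith
  have hex := exists_large_q F (B := p + ε / 2) hr (phi_top_s10 F hγ hδ hγhat)
  classical
  set n := Nat.find hex with hn
  have hn1 := Nat.find_spec hex
  have hn0 : n ≠ 0 := by
    intro h0
    rw [← hn, h0, pow_zero] at hn1
    have : ∫⁻ x, ENNReal.ofReal (ww γ δ 1 x) ∂F ≤ phi F γ := by
      apply lintegral_mono
      intro x
      apply ENNReal.ofReal_le_ofReal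
      unfold ww
      exact mul_le_of_le_one_right (Real.exp_pos _).le (min_le_right _ _)
    have h3 := hn1.trans_le this
    rw [hφ] at h3
    have := (ENNReal.ofReal_lt_ofReal_iff_of_nonneg hpos.le).1 h3
    linarith
  obtain ⟨m, hm⟩ := Nat.exists_eq_succ_of_ne_zero hn0
  have hm1 := Nat.find_min hex (show m < Nat.find hex by omega)
  rw [not_lt] at hm1
  rw [← hn] at hn1
  have hq : 1 ≤ r ^ n := one_le_pow₀ hr.le
  refine ⟨δ, r ^ n, M, hδ, hδ1, hq, hM, ?_, ?_⟩
  · rw [hm, Nat.succ_eq_add_one, pow_succ]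
    refine (ww_scale F hr.le).trans ?_
    calc _ ≤ ENNReal.ofReal r * ENNReal.ofReal (p + ε / 2) := by gcongr
      _ = ENNReal.ofReal (p + ε) := by
        rw [← ENNReal.ofReal_mul (by linarith), hrdef, div_mul_cancel₀ _ hpos.ne']
  · generalize r ^ n = q at *
    have hsplit := lintegral_add_compl (μ := F) (fun x => ENNReal.ofReal (ww γ δ q x))
      (measurableSet_Iic (a := M))
    have hlow : ∫⁻ x in Iic M, ENNReal.ofReal (ww γ δ q x) ∂F ≤ ENNReal.ofReal (p + ε / 4) := by
      calc _ ≤ ∫⁻ x in Iic M,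
            ENNReal.ofReal (Real.exp (δ * M)) * ENNReal.ofReal (Real.exp (γ * x)) ∂F := by
            apply setLIntegral_mono (by fun_prop)
            intro x hx
            rw [← ENNReal.ofReal_mul (Real.exp_pos _).le]
            apply ENNReal.ofReal_le_ofReal
            unfold ww
            rw [mul_comm]
            have : δ * x ≤ δ * M := mul_le_mul_of_nonneg_left hx hδ.le
            gcongr
            exact (min_le_left _ _).trans (Real.exp_le_exp.2 this)
        _ ≤ ∫⁻ x, ENNReal.ofReal (Real.exp (δ * M)) * ENNReal.ofReal (Real.exp (γ * x)) ∂F :=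
            setLIntegral_le_lintegral _ _
        _ = ENNReal.ofReal (Real.exp (δ * M)) * phi F γ := by
            rw [lintegral_const_mul _ (by fun_prop)]; rfl
        _ = ENNReal.ofReal (p * Real.exp (δ * M)) := by
            rw [hφ, ← ENNReal.ofReal_mul (Real.exp_pos _).le, mul_comm]
        _ ≤ _ := ENNReal.ofReal_le_ofReal hδM.le
    have hhigh : ENNReal.ofReal (ε / 4) ≤ ∫⁻ x in (Iic M)ᶜ, ENNReal.ofReal (ww γ δ q x) ∂F := by
      by_contra! hcon
      have h4 := ENNReal.add_lt_add_of_le_of_lt (by exact (hlow.trans_lt ENNReal.ofReal_lt_top).ne)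
        hlow hcon
      rw [hsplit, ← ENNReal.ofReal_add (by linarith) (by linarith)] at h4
      have h5 := hn1.trans h4
      rw [ENNReal.ofReal_lt_ofReal_iff_of_nonneg hpos.le] at h5
      linarith
    calc ENNReal.ofReal N = ENNReal.ofReal M * ENNReal.ofReal (ε / 4) := by
          rw [← ENNReal.ofReal_mul hM]; congr 1; rw [hMdef]; field_simp
      _ ≤ ENNReal.ofReal M * ∫⁻ x in (Iic M)ᶜ, ENNReal.ofReal (ww γ δ q x) ∂F := by gcongr
      _ = ∫⁻ x in (Iic M)ᶜ, ENNReal.ofReal M * ENNReal.ofReal (ww γ δ q x) ∂F := by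
          rw [lintegral_const_mul _ (ww_cont γ δ _).measurable.ennreal_ofReal]
      _ ≤ ∫⁻ x in (Iic M)ᶜ, ENNReal.ofReal (ff γ δ q M x) ∂F := by
          apply setLIntegral_mono (ff_cont γ δ q M).measurable.ennreal_ofReal
          intro x hx
          rw [← ENNReal.ofReal_mul hM]
          apply ENNReal.ofReal_le_ofReal
          unfold ff
          have hx' : M < x := by simpa using hx
          rw [max_eq_left (by linarith), min_eq_right hx'.le]
      _ ≤ _ := setLIntegral_le_lintegral _ _

lemma ff_fin (F : Measure ℝ) {γ δ q M P : ℝ} (hq : 1 ≤ q) (hM : 0 ≤ M)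
    (h : ∫⁻ x, ENNReal.ofReal (ww γ δ q x) ∂F ≤ ENNReal.ofReal P) :
    ∫⁻ x, ENNReal.ofReal (ff γ δ q M x) ∂F ≠ ⊤ := by
  have : ∫⁻ x, ENNReal.ofReal (ff γ δ q M x) ∂F ≤ ENNReal.ofReal M * ENNReal.ofReal P := by
    refine le_trans ?_ (mul_le_mul' le_rfl h)
    rw [← lintegral_const_mul _ (ww_cont γ δ _).measurable.ennreal_ofReal]
    apply lintegral_mono
    intro x
    simp only
    rw [← ENNReal.ofReal_mul hM]
    apply ENNReal.ofReal_le_ofReal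
    unfold ff
    have := ww_nonneg (γ := γ) (δ := δ) hq x
    gcongr
    exact min_le_right _ _
  exact ne_top_of_le_ne_top (ENNReal.mul_ne_top ENNReal.ofReal_ne_top ENNReal.ofReal_ne_top) this

/-- The integral is at most a bounded part plus the integral over the tail. -/
lemma ff_split (μ : Measure ℝ) [IsProbabilityMeasure μ] {f : ℝ → ℝ} {A D : ℝ}
    (h : ∀ x ≤ A, f x ≤ D) :
    ∫⁻ x, ENNReal.ofReal (f x) ∂μ ≤
      ENNReal.ofReal D + ∫⁻ x in Ioi A, ENNReal.ofReal (f x) ∂μ := by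
  rw [← lintegral_add_compl (μ := μ) (fun x => ENNReal.ofReal (f x)) (measurableSet_Iic (a := A)),
    compl_Iic]
  gcongr
  calc _ ≤ ∫⁻ x in Iic A, ENNReal.ofReal D ∂μ := by
        apply setLIntegral_mono (by fun_prop)
        intro x hx
        exact ENNReal.ofReal_le_ofReal (h x hx)
    _ = ENNReal.ofReal D * μ (Iic A) := by simp
    _ ≤ ENNReal.ofReal D * 1 := by gcongr; exact prob_le_one
    _ = _ := mul_one _

instance (F : Measure ℝ) [IsProbabilityMeasure F] : IsProbabilityMeasure (mconv F F) := by
  unfold mconv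
  exact Measure.isProbabilityMeasure_map (by fun_prop)

lemma lower (F : Measure ℝ) [IsProbabilityMeasure F] (hsupp : F (Set.Iio 0) = 0)
    {γ p : ℝ} (hγ : 0 < γ) (hp : 0 ≤ p)
    (hγhat : ENNReal.ofReal γ = gammaHat F)
    (hφ : phi F γ = ENNReal.ofReal p) {c x0 : ℝ} (hc : 2 * p < c) (hx0 : 0 ≤ x0)
    (h : ∀ x, x0 ≤ x → ENNReal.ofReal c * tail F x ≤ tail (mconv F F) x) : False := by
  set ε : ℝ := (c - 2 * p) / 4 with hεd
  have hε : 0 < ε := by rw [hεd]; linarith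
  set D : ℝ := Real.exp (γ * x0) * (x0 * Real.exp x0) with hD
  have hD0 : 0 ≤ D := by positivity
  have hc0 : 0 < c := by linarith
  obtain ⟨δ, q, M, hδ, hδ1, hq, hM, hw, hN⟩ := key F hγ hp hγhat hφ hε
    (N := c * D / (2 * ε) + 1) (by positivity)
  have hfin := ff_fin F hq hM hw
  have h1 := ff_split F (f := ff γ δ q M) (A := x0) (D := D)
    (fun x hx => ff_le hγ hδ hδ1 hq hM hx0 hx)
  have h2 : ENNReal.ofReal c * ∫⁻ x in Ioi x0, ENNReal.ofReal (ff γ δ q M x) ∂F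
      ≤ ∫⁻ x in Ioi x0, ENNReal.ofReal (ff γ δ q M x) ∂(mconv F F) := by
    have := tail_cmp (μ := ENNReal.ofReal c • F) (ν := mconv F F) (x0 := x0)
      (by intro x hx; simpa [tail] using h x hx) (ff_cont γ δ q M) (ff_mono hγ hδ hq hM)
      (ff_nonneg hq hM)
    simpa [Measure.restrict_smul, lintegral_smul_measure] using this
  have h3 : ∫⁻ x, ENNReal.ofReal (ff γ δ q M x) ∂(mconv F F) ≤
      2 * ((∫⁻ x, ENNReal.ofReal (ff γ δ q M x) ∂F) * ∫⁻ x, ENNReal.ofReal (ww γ δ q x) ∂F) := by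
    rw [lint_conv F (ff_cont γ δ q M).measurable.ennreal_ofReal,
      ← lint_sym F (ff_cont γ δ q M).measurable.ennreal_ofReal
        (ww_cont γ δ q).measurable.ennreal_ofReal]
    apply lintegral_mono_ae
    filter_upwards [ae_prod_nonneg F hsupp] with z hz
    have a1 := ff_nonneg (γ := γ) (δ := δ) hq hM z.1
    have a2 := ff_nonneg (γ := γ) (δ := δ) hq hM z.2
    have b1 := ww_nonneg (γ := γ) (δ := δ) hq z.1
    have b2 := ww_nonneg (γ := γ) (δ := δ) hq z.2
    rw [← ENNReal.ofReal_mul a1, ← ENNReal.ofReal_mul b1,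
      ← ENNReal.ofReal_add (by positivity) (by positivity)]
    exact ENNReal.ofReal_le_ofReal (ff_sub hδ hq hM hz.1 hz.2)
  set I := ∫⁻ x, ENNReal.ofReal (ff γ δ q M x) ∂F with hI
  have h4 : ENNReal.ofReal c * I ≤
      ENNReal.ofReal c * ENNReal.ofReal D + 2 * (I * ENNReal.ofReal (p + ε)) := by
    calc _ ≤ ENNReal.ofReal c *
          (ENNReal.ofReal D + ∫⁻ x in Ioi x0, ENNReal.ofReal (ff γ δ q M x) ∂F) := by gcongr
      _ ≤ _ := by
        rw [mul_add]
        refine add_le_add le_rfl ?_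
        refine h2.trans ((setLIntegral_le_lintegral _ _).trans (h3.trans ?_))
        gcongr
  obtain ⟨i, hi0, hi⟩ : ∃ i : ℝ, 0 ≤ i ∧ I = ENNReal.ofReal i :=
    ⟨I.toReal, ENNReal.toReal_nonneg, (ENNReal.ofReal_toReal hfin).symm⟩
  rw [hi, show (2 : ℝ≥0∞) = ENNReal.ofReal 2 by simp, ← ENNReal.ofReal_mul hc0.le,
    ← ENNReal.ofReal_mul hc0.le, ← ENNReal.ofReal_mul hi0, ← ENNReal.ofReal_mul (by norm_num),
    ← ENNReal.ofReal_add (by positivity) (by positivity),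
    ENNReal.ofReal_le_ofReal_iff (by positivity)] at h4
  rw [hi, ENNReal.ofReal_le_ofReal_iff hi0] at hN
  have h5 : c * D / (2 * ε) * (2 * ε) = c * D := by field_simp
  have h6 : c = 2 * p + 4 * ε := by rw [hεd]; ring
  have h7 : i * (2 * ε) ≤ c * D := by
    have : c * i = 2 * p * i + 4 * ε * i := by rw [h6]; ring
    nlinarith
  nlinarith

lemma upper (F : Measure ℝ) [IsProbabilityMeasure F] (hsupp : F (Set.Iio 0) = 0)
    {γ p : ℝ} (hγ : 0 < γ) (hp : 0 ≤ p)
    (hγhat : ENNReal.ofReal γ = gammaHat F)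
    (hφ : phi F γ = ENNReal.ofReal p) {c x0 : ℝ} (hc0 : 0 ≤ c) (hc : c < 2 * p) (hx0 : 0 ≤ x0)
    (h : ∀ x, x0 ≤ x → tail (mconv F F) x ≤ ENNReal.ofReal c * tail F x) : False := by
  set ε : ℝ := (2 * p - c) / 4 with hεd
  have hε : 0 < ε := by rw [hεd]; linarith
  have hpe : 0 ≤ p - ε := by rw [hεd]; linarith
  obtain ⟨A, hA0, hA⟩ : ∃ A : ℝ, 0 ≤ A ∧
      ENNReal.ofReal (p - ε) ≤ ∫⁻ x in Iic A, ENNReal.ofReal (Real.exp (γ * x)) ∂F := by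
    have hs := setLIntegral_iUnion_of_directed (μ := F)
      (fun x => ENNReal.ofReal (Real.exp (γ * x))) (s := fun n : ℕ => Iic (n : ℝ))
      (Monotone.directed_le (fun n m hnm => Iic_subset_Iic.2 (Nat.cast_le.2 hnm)))
    have hu : (⋃ n : ℕ, Iic (n : ℝ)) = univ := by
      ext x; simpa using exists_nat_ge x
    rw [hu, setLIntegral_univ] at hs
    have : ENNReal.ofReal (p - ε) < phi F γ := by
      rw [hφ, ENNReal.ofReal_lt_ofReal_iff_of_nonneg hpe]; linarith
    unfold phi at this
    rw [hs, lt_iSup_iff] at this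
    obtain ⟨n, hn⟩ := this
    exact ⟨n, n.cast_nonneg, hn.le⟩
  set D : ℝ := Real.exp (γ * x0) * (x0 * Real.exp x0) with hD
  have hD0 : 0 ≤ D := by positivity
  set D' : ℝ := Real.exp (γ * A) * (A * Real.exp A) with hD'
  have hD'0 : 0 ≤ D' := by positivity
  obtain ⟨δ, q, M, hδ, hδ1, hq, hM, hw, hN⟩ := key F hγ hp hγhat hφ hε
    (N := (D + 2 * (p - ε) * D') / (2 * ε) + 1) (by positivity)
  have hfin := ff_fin F hq hM hw
  have h1 := ff_split F (f := ff γ δ q M) (A := A) (D := D')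
    (fun x hx => ff_le hγ hδ hδ1 hq hM hA0 hx)
  have h1' := ff_split (mconv F F) (f := ff γ δ q M) (A := x0) (D := D)
    (fun x hx => ff_le hγ hδ hδ1 hq hM hx0 hx)
  have h2 : ∫⁻ x in Ioi x0, ENNReal.ofReal (ff γ δ q M x) ∂(mconv F F) ≤
      ENNReal.ofReal c * ∫⁻ x in Ioi x0, ENNReal.ofReal (ff γ δ q M x) ∂F := by
    have := tail_cmp (ν := ENNReal.ofReal c • F) (μ := mconv F F) (x0 := x0)
      (by intro x hx; simpa [tail] using h x hx) (ff_cont γ δ q M) (ff_mono hγ hδ hq hM)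
      (ff_nonneg hq hM)
    simpa [Measure.restrict_smul, lintegral_smul_measure] using this
  have h3 : 2 * ((∫⁻ x in Ioi A, ENNReal.ofReal (ff γ δ q M x) ∂F) *
      ∫⁻ x in Iic A, ENNReal.ofReal (Real.exp (γ * x)) ∂F) ≤
      ∫⁻ x, ENNReal.ofReal (ff γ δ q M x) ∂(mconv F F) := by
    have m1 : Measurable (fun x => ENNReal.ofReal (ff γ δ q M x)) :=
      (ff_cont γ δ q M).measurable.ennreal_ofReal
    have m2 : Measurable (fun x => ENNReal.ofReal (Real.exp (γ * x))) := by fun_prop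
    rw [lint_conv F m1, ← lintegral_indicator measurableSet_Ioi,
      ← lintegral_indicator measurableSet_Iic,
      ← lint_sym F (m1.indicator measurableSet_Ioi) (m2.indicator measurableSet_Iic)]
    apply lintegral_mono_ae
    filter_upwards [ae_prod_nonneg F hsupp] with z hz
    have a1 := ff_nonneg (γ := γ) (δ := δ) hq hM z.1
    have a2 := ff_nonneg (γ := γ) (δ := δ) hq hM z.2
    have s1 := ff_super (γ := γ) (x := z.1) hδ hq hM hz.2
    have s2 := ff_super (γ := γ) (x := z.2) hδ hq hM hz.1
    by_cases c1 : z.1 ≤ A <;> by_cases c2 : z.2 ≤ A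
    · simp [indicator, c1, c2, not_lt.2 c1, not_lt.2 c2]
    · simp only [indicator, mem_Ioi, mem_Iic, c1, c2, not_lt.2 c1, not_le.1 c2, if_true, if_false,
        zero_mul, zero_add]
      rw [← ENNReal.ofReal_mul (Real.exp_pos _).le]
      apply ENNReal.ofReal_le_ofReal
      rw [mul_comm, add_comm]; exact s2
    · simp only [indicator, mem_Ioi, mem_Iic, c1, c2, not_lt.2 c2, not_le.1 c1, if_true, if_false,
        mul_zero, add_zero]
      rw [← ENNReal.ofReal_mul a1]
      exact ENNReal.ofReal_le_ofReal s1
    · simp [indicator, c1, c2]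
  set I := ∫⁻ x, ENNReal.ofReal (ff γ δ q M x) ∂F with hI
  have h4 : 2 * (I * ENNReal.ofReal (p - ε)) ≤
      2 * (ENNReal.ofReal D' * ENNReal.ofReal (p - ε)) +
        (ENNReal.ofReal D + ENNReal.ofReal c * I) := by
    calc _ ≤ 2 * ((ENNReal.ofReal D' + ∫⁻ x in Ioi A, ENNReal.ofReal (ff γ δ q M x) ∂F)
          * ENNReal.ofReal (p - ε)) := by gcongr
      _ ≤ _ := by
        rw [add_mul, mul_add]
        gcongr
        refine le_trans ?_ (h3.trans (h1'.trans ?_))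
        · gcongr
        · gcongr
          exact h2.trans (mul_le_mul' le_rfl (setLIntegral_le_lintegral _ _))
  obtain ⟨i, hi0, hi⟩ : ∃ i : ℝ, 0 ≤ i ∧ I = ENNReal.ofReal i :=
    ⟨I.toReal, ENNReal.toReal_nonneg, (ENNReal.ofReal_toReal hfin).symm⟩
  rw [hi, show (2 : ℝ≥0∞) = ENNReal.ofReal 2 by simp, ← ENNReal.ofReal_mul hc0,
    ← ENNReal.ofReal_mul hD'0, ← ENNReal.ofReal_mul hi0, ← ENNReal.ofReal_mul (by norm_num),
    ← ENNReal.ofReal_mul (by norm_num),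
    ← ENNReal.ofReal_add (by positivity) (by positivity),
    ← ENNReal.ofReal_add (by positivity) (by positivity),
    ENNReal.ofReal_le_ofReal_iff (by positivity)] at h4
  rw [hi, ENNReal.ofReal_le_ofReal_iff hi0] at hN
  have h5 : (D + 2 * (p - ε) * D') / (2 * ε) * (2 * ε) = D + 2 * (p - ε) * D' := by field_simp
  have h6 : c = 2 * p - 4 * ε := by rw [hεd]; ring
  have h7 : i * (2 * ε) ≤ D + 2 * (p - ε) * D' := by
    have : c * i = 2 * p * i - 4 * ε * i := by rw [h6]; ring
    nlinarith
  nlinarith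

/-- Lemma 9: if 0 < γ̂ < ∞ and φ(γ̂) < ∞, then
liminf (F*F)‾/F̄ ≤ 2φ(γ̂) ≤ limsup (F*F)‾/F̄. -/
theorem stmt10 (F : MeasureTheory.Measure ℝ) [MeasureTheory.IsProbabilityMeasure F]
    (hsupp : F (Set.Iio 0) = 0) (hub : ∀ x : ℝ, tail F x ≠ 0)
    (γhat : ℝ) (hγpos : 0 < γhat)
    (hγhat : ENNReal.ofReal γhat = gammaHat F)
    (hφ : phi F γhat < ⊤) :
    liminf (fun x : ℝ => tail (mconv F F) x / tail F x) atTop ≤ 2 * phi F γhat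
    ∧
    2 * phi F γhat ≤ limsup (fun x : ℝ => tail (mconv F F) x / tail F x) atTop := by
  obtain ⟨p, hp, hpφ⟩ : ∃ p : ℝ, 0 ≤ p ∧ phi F γhat = ENNReal.ofReal p :=
    ⟨(phi F γhat).toReal, ENNReal.toReal_nonneg, (ENNReal.ofReal_toReal hφ.ne).symm⟩
  have h2p : 2 * phi F γhat = ENNReal.ofReal (2 * p) := by
    rw [hpφ, ENNReal.ofReal_mul (by norm_num)]; simp
  constructor
  · by_contra! hcon
    obtain ⟨c, hc1, hc2⟩ := exists_between hcon
    have hct : c ≠ ⊤ := hc2.ne_top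
    obtain ⟨x0, hx0⟩ := eventually_atTop.1 (eventually_lt_of_lt_liminf hc2)
    refine lower F hsupp hγpos hp hγhat hpφ (c := c.toReal) (x0 := max x0 0) ?_
      (le_max_right _ _) ?_
    · rw [h2p] at hc1
      exact (ENNReal.ofReal_lt_iff_lt_toReal (by positivity) hct).1 hc1
    · intro x hx
      rw [ENNReal.ofReal_toReal hct]
      exact ENNReal.mul_le_of_le_div (hx0 x ((le_max_left _ _).trans hx)).le
  · by_contra! hcon
    obtain ⟨c, hc1, hc2⟩ := exists_between hcon
    have hct : c ≠ ⊤ := hc2.ne_top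
    obtain ⟨x0, hx0⟩ := eventually_atTop.1 (eventually_lt_of_limsup_lt hc1)
    refine upper F hsupp hγpos hp hγhat hpφ (c := c.toReal) (x0 := max x0 0)
      ENNReal.toReal_nonneg ?_ (le_max_right _ _) ?_
    · rw [h2p] at hc2
      exact (ENNReal.lt_ofReal_iff_toReal_lt hct).1 hc2
    · intro x hx
      rw [ENNReal.ofReal_toReal hct]
      exact (ENNReal.div_le_iff (hub x) (measure_ne_top F _)).1
        (hx0 x ((le_max_left _ _).trans hx)).le
end
end

section
/- Let F be a heavy-tailed distribution on [0,∞). If for some c ∈ (0,∞), ∫_0^x F̄(x−y) F̄(y) dy ~ c F̄(x) as x → ∞, then F has finite mean a and F belongs to the class S*, i.e., ∫_0^x F̄(x−y) F̄(y) dy ~ 2a F̄(x). -/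
open MeasureTheory Filter Real Set
open scoped ENNReal Topology

noncomputable section

lemma aux_conv_int (u v : ℝ → ℝ≥0∞) (hu : Measurable u) (hv : Measurable v) :
    ∫⁻ x, ∫⁻ y, u (x - y) * v y = (∫⁻ x, u x) * ∫⁻ x, v x := by
  rw [lintegral_lintegral_swap (by unfold Function.uncurry; fun_prop)]
  have : ∀ y, ∫⁻ x, u (x - y) * v y = (∫⁻ x, u x) * v y := by
    intro y
    rw [lintegral_mul_const _ (by fun_prop), lintegral_sub_right_eq_self]
  simp_rw [this]
  rw [lintegral_const_mul _ hv]

lemma aux_conv (g w m : ℝ → ℝ≥0∞) (hg : Measurable g) (hw : Measurable w) (hm : Measurable m)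
    (hw2 : ∀ y z, 0 ≤ y → 0 ≤ z → w (y + z) ≤ w y * w z)
    (hm2 : ∀ y z, 0 ≤ y → 0 ≤ z → m (y + z) ≤ m y + m z) :
    ∫⁻ x in Ioi (0:ℝ), m x * w x * ∫⁻ y in Ioc (0:ℝ) x, g (x - y) * g y
      ≤ 2 * (∫⁻ x in Ioi (0:ℝ), g x * w x) * ∫⁻ x in Ioi (0:ℝ), m x * (g x * w x) := by
  set u : ℝ → ℝ≥0∞ := (Ici (0:ℝ)).indicator (fun x => g x * w x) with hu
  set v : ℝ → ℝ≥0∞ := (Ici (0:ℝ)).indicator (fun x => m x * (g x * w x)) with hv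
  have hum : Measurable u := (hg.mul hw).indicator measurableSet_Ici
  have hvm : Measurable v := (hm.mul (hg.mul hw)).indicator measurableSet_Ici
  have hU : ∫⁻ x, u x = ∫⁻ x in Ioi (0:ℝ), g x * w x := by
    rw [hu, lintegral_indicator measurableSet_Ici, setLIntegral_congr Ioi_ae_eq_Ici]
  have hV : ∫⁻ x, v x = ∫⁻ x in Ioi (0:ℝ), m x * (g x * w x) := by
    rw [hv, lintegral_indicator measurableSet_Ici, setLIntegral_congr Ioi_ae_eq_Ici]
  calc _ ≤ ∫⁻ x in Ioi (0:ℝ), ((∫⁻ y, u (x - y) * v y) + ∫⁻ y, v (x - y) * u y) := by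
        refine lintegral_mono fun x => ?_
        rw [← lintegral_add_left (by fun_prop), ← lintegral_const_mul _ (by fun_prop)]
        rw [← lintegral_indicator measurableSet_Ioc]
        refine lintegral_mono fun y => ?_
        by_cases hy : y ∈ Ioc (0:ℝ) x
        · have h1 : 0 ≤ y := hy.1.le
          have h2 : 0 ≤ x - y := by linarith [hy.2]
          rw [indicator_of_mem hy]
          simp only [hu, hv]
          rw [indicator_of_mem (show x - y ∈ Ici (0:ℝ) from h2),
            indicator_of_mem (show y ∈ Ici (0:ℝ) from h1),
            indicator_of_mem (show x - y ∈ Ici (0:ℝ) from h2),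
            indicator_of_mem (show y ∈ Ici (0:ℝ) from h1)]
          have e1 := hw2 (x - y) y h2 h1
          have e2 := hm2 (x - y) y h2 h1
          rw [sub_add_cancel] at e1 e2
          calc m x * w x * (g (x - y) * g y)
              ≤ (m (x - y) + m y) * (w (x - y) * w y) * (g (x - y) * g y) := by gcongr
            _ = _ := by ring
        · rw [indicator_of_notMem hy]; exact zero_le
    _ ≤ ∫⁻ x, ((∫⁻ y, u (x - y) * v y) + ∫⁻ y, v (x - y) * u y) := setLIntegral_le_lintegral _ _
    _ = _ := by
        rw [lintegral_add_left, aux_conv_int _ _ hum hvm, aux_conv_int _ _ hvm hum, hU, hV]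
        · ring
        · exact Measurable.lintegral_prod_right' (f := fun p : ℝ × ℝ => u (p.1 - p.2) * v p.2)
            (by fun_prop)

lemma aux_weight (g : ℝ → ℝ≥0∞) (hg : Measurable g)
    (ha : ∫⁻ x in Ioi (0:ℝ), g x ≠ ⊤)
    (hh : ∀ γ : ℝ, 0 < γ → ∫⁻ x in Ioi (0:ℝ), g x * ENNReal.ofReal (exp (γ * x)) = ⊤)
    (δ R : ℝ) (hδ : 0 < δ) (hR : 0 < R) :
    ∃ γ T : ℝ, 0 ≤ γ ∧ 0 ≤ T ∧
      ∫⁻ x in Ioi (0:ℝ), g x * ENNReal.ofReal (exp (min (γ * x) T)) ≤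
        (∫⁻ x in Ioi (0:ℝ), g x) + ENNReal.ofReal δ ∧
      ENNReal.ofReal (R * (δ / 4)) ≤
        ∫⁻ x in Ioi (0:ℝ), ENNReal.ofReal (min x R) *
          (g x * ENNReal.ofReal (exp (min (γ * x) T))) := by
  set a := ∫⁻ x in Ioi (0:ℝ), g x with hadef
  set A := a.toReal with hA
  have haA : a = ENNReal.ofReal A := (ENNReal.ofReal_toReal ha).symm
  have hA0 : 0 ≤ A := ENNReal.toReal_nonneg
  obtain ⟨η, hη, hη2⟩ : ∃ η : ℝ, 0 < η ∧ exp η * (A + δ / 2) ≤ A + δ := by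
    refine ⟨log (1 + δ / (2 * (A + δ))), log_pos (by linarith [show 0 < δ / (2 * (A + δ)) by positivity]), ?_⟩
    rw [exp_log (by positivity)]
    have : δ / (2 * (A + δ)) * (A + δ / 2) ≤ δ / 2 := by
      rw [div_mul_eq_mul_div, div_le_div_iff₀ (by positivity) (by positivity)]
      nlinarith [mul_pos hδ hδ]
    linarith
  obtain ⟨γ, hγ, hγ2⟩ : ∃ γ : ℝ, 0 < γ ∧ exp (γ * R) * A ≤ A + δ / 4 := by
    refine ⟨log (1 + δ / (4 * (A + 1))) / R,
      div_pos (log_pos (by linarith [show 0 < δ / (4 * (A + 1)) by positivity])) hR, ?_⟩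
    rw [div_mul_cancel₀ _ hR.ne', exp_log (by positivity)]
    have : δ / (4 * (A + 1)) * A ≤ δ / 4 := by
      rw [div_mul_eq_mul_div, div_le_div_iff₀ (by positivity) (by positivity)]
      nlinarith
    linarith
  set I : ℕ → ℝ≥0∞ := fun k =>
    ∫⁻ x in Ioi (0:ℝ), g x * ENNReal.ofReal (exp (min (γ * x) (k * η))) with hI
  have hsup : ⨆ k, I k = ⊤ := by
    rw [hI, ← lintegral_iSup]
    · rw [← top_le_iff, ← hh γ hγ]
      refine lintegral_mono fun x => ?_
      obtain ⟨k, hk⟩ := exists_nat_ge (γ * x / η)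
      refine le_trans ?_ (le_iSup _ k)
      rw [div_le_iff₀ hη] at hk
      simp only
      rw [min_eq_left hk]
    · intro k; fun_prop
    · intro i j hij x
      simp only
      gcongr
  have hex : ∃ k, ENNReal.ofReal (A + δ / 2) < I k := by
    rw [← lt_iSup_iff, hsup]; exact ENNReal.ofReal_lt_top
  classical
  let k := Nat.find hex
  have hk1 : ENNReal.ofReal (A + δ / 2) < I k := Nat.find_spec hex
  have hk0 : k ≠ 0 := by
    intro h0
    rw [h0] at hk1
    have : I 0 ≤ a := by
      refine setLIntegral_mono hg fun x hx => ?_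
      have hx' : (0:ℝ) < x := hx
      have : min (γ * x) (((0:ℕ):ℝ) * η) = 0 := by
        simp; positivity
      rw [this]; simp
    have h3 := hk1.trans_le this
    rw [haA, ENNReal.ofReal_lt_ofReal_iff_of_nonneg (by positivity)] at h3
    linarith
  obtain ⟨j, hj⟩ := Nat.exists_eq_succ_of_ne_zero hk0
  have hj1 : I j ≤ ENNReal.ofReal (A + δ / 2) := by
    have := Nat.find_min hex (m := j) (by show j < k; omega)
    exact not_lt.1 this
  have hkj : I k ≤ ENNReal.ofReal (exp η) * I j := by
    rw [hI]; simp only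
    rw [← lintegral_const_mul _ (by fun_prop)]
    refine lintegral_mono fun x => ?_
    simp only
    rw [mul_left_comm, ← ENNReal.ofReal_mul (exp_pos _).le, ← exp_add]
    gcongr
    rw [hj]; push_cast
    rw [← min_add_add_left]
    apply min_le_min
    · linarith
    · linarith
  refine ⟨γ, k * η, hγ.le, by positivity, ?_, ?_⟩
  · calc I k ≤ ENNReal.ofReal (exp η) * I j := hkj
      _ ≤ ENNReal.ofReal (exp η) * ENNReal.ofReal (A + δ / 2) := by gcongr
      _ = ENNReal.ofReal (exp η * (A + δ / 2)) := (ENNReal.ofReal_mul (exp_pos _).le).symm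
      _ ≤ ENNReal.ofReal (A + δ) := ENNReal.ofReal_le_ofReal hη2
      _ = _ := by rw [haA, ENNReal.ofReal_add hA0 hδ.le]
  · set W : ℝ → ℝ≥0∞ := fun x => g x * ENNReal.ofReal (exp (min (γ * x) (k * η))) with hW
    have hWm : Measurable W := by fun_prop
    have hsplit : I k = (∫⁻ x in Ioc 0 R, W x) + ∫⁻ x in Ioi R, W x := by
      rw [← lintegral_union measurableSet_Ioi, Ioc_union_Ioi_eq_Ioi hR.le]
      exact Set.disjoint_left.2 fun x hx hx' => absurd hx.2 (not_le.2 hx')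
    have hfirst : ∫⁻ x in Ioc 0 R, W x ≤ ENNReal.ofReal (A + δ / 4) := by
      calc _ ≤ ∫⁻ x in Ioc 0 R, ENNReal.ofReal (exp (γ * R)) * g x := by
            refine setLIntegral_mono (by fun_prop) fun x hx => ?_
            simp only [hW]
            rw [mul_comm (g x)]
            gcongr
            exact (min_le_left _ _).trans (mul_le_mul_of_nonneg_left hx.2 hγ.le)
        _ = ENNReal.ofReal (exp (γ * R)) * ∫⁻ x in Ioc 0 R, g x := lintegral_const_mul _ hg
        _ ≤ ENNReal.ofReal (exp (γ * R)) * a := by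
            gcongr
            exact lintegral_mono_set Ioc_subset_Ioi_self
        _ = ENNReal.ofReal (exp (γ * R) * A) := by rw [haA, ENNReal.ofReal_mul (exp_pos _).le]
        _ ≤ _ := ENNReal.ofReal_le_ofReal hγ2
    have hsecond : ENNReal.ofReal (δ / 4) ≤ ∫⁻ x in Ioi R, W x := by
      have h1 : ENNReal.ofReal (A + δ / 4) + ENNReal.ofReal (δ / 4) ≤
          ENNReal.ofReal (A + δ / 4) + ∫⁻ x in Ioi R, W x := by
        rw [← ENNReal.ofReal_add (by positivity) (by positivity)]
        calc _ = ENNReal.ofReal (A + δ / 2) := by congr 1; ring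
          _ ≤ I k := hk1.le
          _ ≤ _ := by rw [hsplit]; gcongr
      exact (ENNReal.add_le_add_iff_left ENNReal.ofReal_ne_top).1 h1
    calc ENNReal.ofReal (R * (δ / 4)) = ENNReal.ofReal R * ENNReal.ofReal (δ / 4) :=
          ENNReal.ofReal_mul hR.le
      _ ≤ ENNReal.ofReal R * ∫⁻ x in Ioi R, W x := by gcongr
      _ = ∫⁻ x in Ioi R, ENNReal.ofReal R * W x := (lintegral_const_mul _ hWm).symm
      _ ≤ ∫⁻ x in Ioi R, ENNReal.ofReal (min x R) * W x := by
          refine setLIntegral_mono (by fun_prop) fun x hx => ?_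
          rw [min_eq_right (le_of_lt hx)]
      _ ≤ _ := lintegral_mono_set (Ioi_subset_Ioi hR.le)

lemma aux_heavy (F : MeasureTheory.Measure ℝ) [MeasureTheory.IsProbabilityMeasure F]
    (hsupp : F (Set.Iio 0) = 0) (hheavy : IsHeavyTailed F) (γ : ℝ) (hγ : 0 < γ) :
    ∫⁻ x in Ioi (0:ℝ), tail F x * ENNReal.ofReal (exp (γ * x)) = ⊤ := by
  have hnn : 0 ≤ᵐ[F] (fun x : ℝ => x) := by
    rw [Filter.EventuallyLE, ae_iff]
    simpa [Iio_def] using hsupp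
  have key := lintegral_comp_eq_lintegral_meas_lt_mul (g := fun t => exp (γ * t)) F hnn
    (by fun_prop) (fun t _ => (by fun_prop : Continuous fun t => exp (γ * t)).intervalIntegrable _ _)
    (Eventually.of_forall fun t => (exp_pos _).le)
  have e : ∀ x : ℝ, ∫ t in (0:ℝ)..x, exp (γ * t) = γ⁻¹ * (exp (γ * x) - 1) := by
    intro x
    rw [intervalIntegral.integral_comp_mul_left (fun t => exp t) hγ.ne']
    simp
  simp only [e] at key
  change _ = ∫⁻ x in Ioi (0:ℝ), tail F x * ENNReal.ofReal (exp (γ * x)) at key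
  rw [← key]
  by_contra hne
  have h1 := hheavy γ hγ
  have h2 : phi F γ ≤ ENNReal.ofReal γ *
      (∫⁻ x, ENNReal.ofReal (γ⁻¹ * (exp (γ * x) - 1)) ∂F) + 1 := by
    rw [← lintegral_const_mul _ (by fun_prop)]
    have : (1 : ℝ≥0∞) = ∫⁻ x, 1 ∂F := by simp
    rw [this, ← lintegral_add_right _ measurable_const]
    refine lintegral_mono fun x => ?_
    simp only
    rw [← ENNReal.ofReal_mul hγ.le, mul_inv_cancel_left₀ hγ.ne']
    calc ENNReal.ofReal (exp (γ * x)) = ENNReal.ofReal ((exp (γ * x) - 1) + 1) := by simp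
      _ ≤ _ := by
        refine ENNReal.ofReal_add_le.trans ?_
        simp
  rw [h1, top_le_iff] at h2
  exact (ENNReal.add_ne_top.2 ⟨ENNReal.mul_ne_top ENNReal.ofReal_ne_top hne, ENNReal.one_ne_top⟩) h2

/-- Lower bound for the convolution. -/
lemma aux_lower (g : ℝ → ℝ≥0∞) (hg : Antitone g) (R x : ℝ) (hx : 2 * R ≤ x) (hR : 0 ≤ R) :
    2 * (∫⁻ y in Ioc (0:ℝ) R, g y) * g x ≤ ∫⁻ y in Ioc (0:ℝ) x, g (x - y) * g y := by
  have hgm : Measurable g := hg.measurable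
  have hsub : Ioc (0:ℝ) R ∪ Ioc (x - R) x ⊆ Ioc (0:ℝ) x := by
    rintro y (hy | hy)
    · exact ⟨hy.1, by linarith [hy.2]⟩
    · exact ⟨by linarith [hy.1], hy.2⟩
  have hdisj : Disjoint (Ioc (0:ℝ) R) (Ioc (x - R) x) :=
    Set.disjoint_left.2 fun y hy hy' => by linarith [hy.2, hy'.1]
  have h1 : (∫⁻ y in Ioc (0:ℝ) R, g y) * g x ≤ ∫⁻ y in Ioc (0:ℝ) R, g (x - y) * g y := by
    rw [← lintegral_mul_const _ hgm]
    refine setLIntegral_mono (by fun_prop) fun y hy => ?_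
    rw [mul_comm]
    gcongr
    exact hg (by linarith [hy.1])
  have h2 : (∫⁻ y in Ioc (0:ℝ) R, g y) * g x ≤ ∫⁻ y in Ioc (x - R) x, g (x - y) * g y := by
    have e : ∫⁻ y in Ioc (0:ℝ) R, g y = ∫⁻ y in Ioc (x - R) x, g (x - y) := by
      rw [setLIntegral_congr (Ico_ae_eq_Ioc (μ := volume) (a := (0:ℝ)) (b := R)).symm,
        ← lintegral_indicator measurableSet_Ico, ← lintegral_indicator measurableSet_Ioc,
        ← lintegral_sub_left_eq_self _ x]
      refine lintegral_congr fun y => ?_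
      by_cases hy : y ∈ Ioc (x - R) x
      · rw [indicator_of_mem hy, indicator_of_mem]
        exact ⟨by linarith [hy.2], by linarith [hy.1]⟩
      · rw [indicator_of_notMem hy, indicator_of_notMem]
        rintro ⟨p, q⟩
        exact hy ⟨by linarith, by linarith⟩
    rw [e, ← lintegral_mul_const _ (by fun_prop)]
    refine setLIntegral_mono (by fun_prop) fun y hy => ?_
    gcongr
    exact hg hy.2
  calc _ = (∫⁻ y in Ioc (0:ℝ) R, g y) * g x + (∫⁻ y in Ioc (0:ℝ) R, g y) * g x := by ring
    _ ≤ _ := add_le_add h1 h2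
    _ = ∫⁻ y in Ioc (0:ℝ) R ∪ Ioc (x - R) x, g (x - y) * g y :=
        (lintegral_union measurableSet_Ioc hdisj).symm
    _ ≤ _ := lintegral_mono_set hsub

/-- Upper bound on an eventual lower constant. -/
lemma aux_upper (g : ℝ → ℝ≥0∞) (hg : Measurable g)
    (ha : ∫⁻ x in Ioi (0:ℝ), g x ≠ ⊤)
    (hh : ∀ γ : ℝ, 0 < γ → ∫⁻ x in Ioi (0:ℝ), g x * ENNReal.ofReal (exp (γ * x)) = ⊤)
    (ε x0 : ℝ) (hε : 0 < ε) (hx0 : 0 < x0)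
    (hG : ∀ x, x0 < x → ENNReal.ofReal (2 * (∫⁻ x in Ioi (0:ℝ), g x).toReal + 4 * ε) * g x ≤
      ∫⁻ y in Ioc (0:ℝ) x, g (x - y) * g y) : False := by
  set a := ∫⁻ x in Ioi (0:ℝ), g x with hadef
  set A := a.toReal with hA
  have haA : a = ENNReal.ofReal A := (ENNReal.ofReal_toReal ha).symm
  have hA0 : 0 ≤ A := ENNReal.toReal_nonneg
  set c := 2 * A + 4 * ε with hc
  have hc0 : 0 < c := by positivity
  set B := c * x0 * (A + ε) with hB
  have hB0 : 0 < B := by positivity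
  set R := 4 * B / ε ^ 2 with hRdef
  have hR : 0 < R := by positivity
  obtain ⟨γ, T, hγ, hT, hI, hK⟩ := aux_weight g hg ha hh ε R hε hR
  rw [← hadef, haA, ← ENNReal.ofReal_add hA0 hε.le] at hI
  set w : ℝ → ℝ≥0∞ := fun x => ENNReal.ofReal (exp (min (γ * x) T)) with hw
  set m : ℝ → ℝ≥0∞ := fun x => ENNReal.ofReal (min x R) with hm
  have hwm : Measurable w := by fun_prop
  have hmm : Measurable m := by fun_prop
  have hconv := aux_conv g w m hg hwm hmm (by
    intro y z hy hz
    simp only [hw]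
    rw [← ENNReal.ofReal_mul (exp_pos _).le, ← exp_add]
    gcongr
    have h1 : 0 ≤ γ * y := by positivity
    have h2 : 0 ≤ γ * z := by positivity
    rw [mul_add]
    rcases min_cases (γ * y) T with h | h <;> rcases min_cases (γ * z) T with h' | h' <;>
      rcases min_cases (γ * y + γ * z) T with h'' | h'' <;> linarith) (by
    intro y z hy hz
    simp only [hm]
    rw [← ENNReal.ofReal_add (le_min hy hR.le) (le_min hz hR.le)]
    gcongr
    rcases min_cases y R with h | h <;> rcases min_cases z R with h' | h' <;>
      rcases min_cases (y + z) R with h'' | h'' <;> linarith)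
  set K := ∫⁻ x in Ioi (0:ℝ), m x * (g x * w x) with hKdef
  have hKtop : K ≠ ⊤ := by
    have : K ≤ ENNReal.ofReal R * ∫⁻ x in Ioi (0:ℝ), g x * w x := by
      rw [← lintegral_const_mul _ (by fun_prop)]
      refine lintegral_mono fun x => ?_
      simp only [hm]
      gcongr
      exact min_le_right _ _
    exact ne_top_of_le_ne_top (ENNReal.mul_ne_top ENNReal.ofReal_ne_top
      (ne_top_of_le_ne_top ENNReal.ofReal_ne_top hI)) this
  have hsplit : K = (∫⁻ x in Ioc 0 x0, m x * (g x * w x)) + ∫⁻ x in Ioi x0, m x * (g x * w x) := by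
    rw [← lintegral_union measurableSet_Ioi, Ioc_union_Ioi_eq_Ioi hx0.le]
    exact Set.disjoint_left.2 fun x hx hx' => absurd hx.2 (not_le.2 hx')
  have hfirst : ∫⁻ x in Ioc 0 x0, m x * (g x * w x) ≤ ENNReal.ofReal (x0 * (A + ε)) := by
    calc _ ≤ ∫⁻ x in Ioc 0 x0, ENNReal.ofReal x0 * (g x * w x) := by
          refine setLIntegral_mono (by fun_prop) fun x hx => ?_
          simp only [hm]
          gcongr
          exact (min_le_left _ _).trans hx.2
      _ = ENNReal.ofReal x0 * ∫⁻ x in Ioc 0 x0, g x * w x := lintegral_const_mul _ (by fun_prop)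
      _ ≤ ENNReal.ofReal x0 * ENNReal.ofReal (A + ε) := by
          gcongr
          exact (lintegral_mono_set Ioc_subset_Ioi_self).trans hI
      _ = _ := (ENNReal.ofReal_mul hx0.le).symm
  have hsecond : ENNReal.ofReal c * ∫⁻ x in Ioi x0, m x * (g x * w x) ≤
      2 * ENNReal.ofReal (A + ε) * K := by
    calc _ = ∫⁻ x in Ioi x0, ENNReal.ofReal c * (m x * (g x * w x)) :=
          (lintegral_const_mul _ (by fun_prop)).symm
      _ ≤ ∫⁻ x in Ioi x0, m x * w x * ∫⁻ y in Ioc (0:ℝ) x, g (x - y) * g y := by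
          refine setLIntegral_mono' measurableSet_Ioi fun x hx => ?_
          calc _ = m x * w x * (ENNReal.ofReal c * g x) := by ring
            _ ≤ _ := by gcongr; exact hG x hx
      _ ≤ _ := lintegral_mono_set (Ioi_subset_Ioi hx0.le)
      _ ≤ _ := hconv
      _ ≤ _ := by gcongr
  have hfin : ENNReal.ofReal c * K ≤
      ENNReal.ofReal c * ENNReal.ofReal (x0 * (A + ε)) + 2 * ENNReal.ofReal (A + ε) * K := by
    calc _ = ENNReal.ofReal c * (∫⁻ x in Ioc 0 x0, m x * (g x * w x)) +
          ENNReal.ofReal c * ∫⁻ x in Ioi x0, m x * (g x * w x) := by rw [← mul_add, ← hsplit]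
      _ ≤ _ := by gcongr
  have hKr : K = ENNReal.ofReal K.toReal := (ENNReal.ofReal_toReal hKtop).symm
  have hk0 : 0 ≤ K.toReal := ENNReal.toReal_nonneg
  have h2 : (2 : ℝ≥0∞) = ENNReal.ofReal 2 := by simp
  have hAε : 0 ≤ A + ε := by positivity
  rw [hKr, h2, ← ENNReal.ofReal_mul hc0.le, ← ENNReal.ofReal_mul hc0.le,
    ← ENNReal.ofReal_mul (by norm_num), ← ENNReal.ofReal_mul (by positivity),
    ← ENNReal.ofReal_add (by positivity) (by positivity),
    ENNReal.ofReal_le_ofReal_iff (by positivity)] at hfin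
  change _ ≤ K at hK
  rw [hKr, ENNReal.ofReal_le_ofReal_iff hk0] at hK
  have e1 : R * (ε / 4) = B / ε := by rw [hRdef]; field_simp
  rw [e1, div_le_iff₀ hε] at hK
  have : 2 * (K.toReal * ε) ≤ B := by rw [hB]; rw [hc] at hfin ⊢; linarith
  linarith

/-- Theorem 5: if F is heavy-tailed and ∫_0^x F̄(x−y)F̄(y)dy ~ cF̄(x)
for some c ∈ (0,∞), then F has finite mean a and F ∈ S*, i.e. c = 2a. -/
theorem stmt12 (F : MeasureTheory.Measure ℝ) [MeasureTheory.IsProbabilityMeasure F]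
    (hsupp : F (Set.Iio 0) = 0) (hub : ∀ x : ℝ, tail F x ≠ 0)
    (hheavy : IsHeavyTailed F)
    (c : ℝ) (hc : 0 < c)
    (h : Tendsto (fun x : ℝ =>
        (∫⁻ y in Set.Ioc (0:ℝ) x, tail F (x - y) * tail F y) / tail F x) atTop
      (𝓝 (ENNReal.ofReal c))) :
    (∫⁻ y in Set.Ioi (0:ℝ), tail F y) ≠ ⊤ ∧
      Tendsto (fun x : ℝ =>
          (∫⁻ y in Set.Ioc (0:ℝ) x, tail F (x - y) * tail F y) / tail F x) atTop
        (𝓝 (2 * ∫⁻ y in Set.Ioi (0:ℝ), tail F y)) := by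
  have hg : Antitone (tail F) := fun x y hxy => measure_mono (Ioi_subset_Ioi hxy)
  have hgt : ∀ x, tail F x ≠ ⊤ := fun x => measure_ne_top _ _
  have hle : ∀ n : ℕ, 2 * (∫⁻ y in Ioc (0:ℝ) n, tail F y) ≤ ENNReal.ofReal c := by
    intro n
    refine ge_of_tendsto h ?_
    filter_upwards [eventually_ge_atTop (2 * (n:ℝ))] with x hx
    rw [ENNReal.le_div_iff_mul_le (Or.inl (hub x)) (Or.inl (hgt x))]
    exact aux_lower _ hg n x hx (Nat.cast_nonneg n)
  have hU : Ioi (0:ℝ) = ⋃ n : ℕ, Ioc (0:ℝ) n := by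
    ext x
    simp only [mem_Ioi, mem_iUnion, mem_Ioc]
    exact ⟨fun hx => (exists_nat_ge x).imp fun n hn => ⟨hx, hn⟩, fun ⟨n, hn⟩ => hn.1⟩
  have hle2 : 2 * (∫⁻ y in Ioi (0:ℝ), tail F y) ≤ ENNReal.ofReal c := by
    rw [hU, setLIntegral_iUnion_of_directed, ENNReal.mul_iSup]
    · exact iSup_le hle
    · exact (monotone_nat_of_le_succ fun n => Ioc_subset_Ioc_right (by simp)).directed_le
  have ha : (∫⁻ y in Ioi (0:ℝ), tail F y) ≠ ⊤ := by
    intro h0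
    rw [h0] at hle2
    simp at hle2
  refine ⟨ha, ?_⟩
  have hge : ENNReal.ofReal c ≤ 2 * (∫⁻ y in Ioi (0:ℝ), tail F y) := by
    by_contra hlt
    rw [not_le] at hlt
    set A := (∫⁻ y in Ioi (0:ℝ), tail F y).toReal with hA
    have hA0 : 0 ≤ A := ENNReal.toReal_nonneg
    have h2 : (2 : ℝ≥0∞) = ENNReal.ofReal 2 := by simp
    rw [← ENNReal.ofReal_toReal ha, h2, ← ENNReal.ofReal_mul (by norm_num),
      ENNReal.ofReal_lt_ofReal_iff hc] at hlt
    change 2 * A < c at hlt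
    have hev := h.eventually (lt_mem_nhds (a := ENNReal.ofReal (2 * A + 4 * ((c - 2 * A) / 8)))
      ((ENNReal.ofReal_lt_ofReal_iff hc).2 (by linarith)))
    obtain ⟨x1, hx1⟩ := eventually_atTop.1 hev
    refine aux_upper (tail F) hg.measurable ha (aux_heavy F hsupp hheavy) ((c - 2 * A) / 8)
      (max x1 1) (by linarith) (by positivity) fun x hx => ?_
    have := (hx1 x ((le_max_left _ _).trans hx.le)).le
    rwa [ENNReal.le_div_iff_mul_le (Or.inl (hub x)) (Or.inl (hgt x))] at this
  rw [le_antisymm hle2 hge]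
  exact h
end
end

section
/- A distribution F on [0,∞) with unbounded support belongs to the class S(γ) with γ = γ̂ (the abscissa of convergence of the Laplace transform φ of F) if and only if: (a) γ = γ̂; (b) (F*F)‾(x) ~ c F̄(x) as x → ∞ for some c ∈ [2,∞); and (c) for every fixed y > 0, liminf_{x→∞} F̄(x−y)/F̄(x) ≥ e^{γy}. -/
open MeasureTheory Filter Real Set
open scoped ENNReal Topology

noncomputable section

/-- The class S(γ): φ(γ) < ∞, F̄(x+y)/F̄(x) → e^{−γy}, and (F*F)‾(x) ~ 2φ(γ)F̄(x). -/
def memS (F : MeasureTheory.Measure ℝ) (γ : ℝ) : Prop :=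
  phi F γ < ⊤ ∧
  (∀ y : ℝ, Tendsto (fun x : ℝ => tail F (x + y) / tail F x) atTop
    (𝓝 (ENNReal.ofReal (Real.exp (-γ * y))))) ∧
  Tendsto (fun x : ℝ => tail (mconv F F) x / tail F x) atTop (𝓝 (2 * phi F γ))

lemma tail_meas (F : Measure ℝ) (x : ℝ) : Measurable (fun y => tail F (x - y)) := by
  have : Monotone (fun y => tail F (x - y)) := fun a b h => tail_anti F (by linarith)
  exact this.measurable

lemma tail_conv_lower (F : Measure ℝ) [IsProbabilityMeasure F] (x : ℝ) :
    2 * ∫⁻ y, (Iic (x/2)).indicator (fun y => tail F (x - y)) y ∂F ≤ tail (mconv F F) x := by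
  set A : Set (ℝ × ℝ) := {p | p.1 ≤ x/2 ∧ x - p.1 < p.2} with hA
  set B : Set (ℝ × ℝ) := {p | p.2 ≤ x/2 ∧ x - p.2 < p.1} with hB
  have mA : MeasurableSet A := by
    exact (measurableSet_le (f := fun p : ℝ × ℝ => p.1) (g := fun _ => x/2)
      (by fun_prop) (by fun_prop)).inter
      (measurableSet_lt (f := fun p : ℝ × ℝ => x - p.1) (g := fun p => p.2)
      (by fun_prop) (by fun_prop))
  have mB : MeasurableSet B := by
    exact (measurableSet_le (f := fun p : ℝ × ℝ => p.2) (g := fun _ => x/2)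
      (by fun_prop) (by fun_prop)).inter
      (measurableSet_lt (f := fun p : ℝ × ℝ => x - p.2) (g := fun p => p.1)
      (by fun_prop) (by fun_prop))
  have eA : (F.prod F) A = ∫⁻ y, (Iic (x/2)).indicator (fun y => tail F (x - y)) y ∂F := by
    rw [Measure.prod_apply mA]
    congr 1 with y
    by_cases h : y ≤ x/2
    · rw [indicator_of_mem (by exact h)]
      unfold tail
      congr 1
      ext z
      simp [hA, h]
    · rw [indicator_of_notMem (by exact h)]
      have : Prod.mk y ⁻¹' A = ∅ := by
        ext z; simp [hA, h]
      rw [this]; simp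
  have eB : (F.prod F) B = ∫⁻ y, (Iic (x/2)).indicator (fun y => tail F (x - y)) y ∂F := by
    rw [Measure.prod_apply_symm mB]
    congr 1 with y
    by_cases h : y ≤ x/2
    · rw [indicator_of_mem (by exact h)]
      unfold tail
      congr 1
      ext z
      simp [hB, h]
    · rw [indicator_of_notMem (by exact h)]
      have : (fun z => (z, y)) ⁻¹' B = ∅ := by
        ext z; simp [hB, h]
      rw [this]; simp
  have hd : Disjoint A B := by
    rw [Set.disjoint_left]
    rintro ⟨p, q⟩ ⟨h1, h2⟩ ⟨h3, h4⟩
    simp only at h1 h2 h3 h4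
    linarith
  unfold tail mconv at *
  rw [Measure.map_apply (by fun_prop) measurableSet_Ioi, two_mul]
  nth_rewrite 1 [← eA]
  rw [← eB, ← measure_union hd mB]
  apply measure_mono
  rintro ⟨p, q⟩ (⟨_, h⟩ | ⟨_, h⟩)
  · simp only [mem_preimage, mem_Ioi] at *; linarith
  · simp only [mem_preimage, mem_Ioi] at *; linarith

lemma fatou_conv (F : Measure ℝ) [IsProbabilityMeasure F]
    (v : ℕ → ℝ) (hv : Tendsto v atTop atTop) (g : ℝ → ℝ≥0∞)
    (hg : ∀ᵐ y ∂F, g y ≤ liminf (fun n => tail F (v n - y) / tail F (v n)) atTop) (L : ℝ≥0∞)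
    (hL : Tendsto (fun n => tail (mconv F F) (v n) / tail F (v n)) atTop (𝓝 L)) :
    2 * ∫⁻ y, g y ∂F ≤ L := by
  set k : ℕ → ℝ → ℝ≥0∞ := fun n y =>
    (Iic (v n/2)).indicator (fun y => tail F (v n - y)) y / tail F (v n) with hk
  have mk : ∀ n, Measurable (k n) := fun n =>
    ((tail_meas F (v n)).indicator measurableSet_Iic).div_const _
  have h1 : ∫⁻ y, g y ∂F ≤ ∫⁻ y, liminf (fun n => k n y) atTop ∂F := by
    apply lintegral_mono_ae
    filter_upwards [hg] with y hy
    refine hy.trans (le_of_eq ?_)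
    apply liminf_congr
    filter_upwards [hv.eventually_ge_atTop (2*y)] with n hn
    have : y ∈ Iic (v n / 2) := by simp only [mem_Iic]; linarith
    simp only [hk, indicator_of_mem this]
  have h2 := lintegral_liminf_le (μ := F) (u := atTop) mk
  have h3 : ∀ n, 2 * ∫⁻ y, k n y ∂F ≤ tail (mconv F F) (v n) / tail F (v n) := by
    intro n
    simp only [hk, div_eq_mul_inv]
    rw [lintegral_mul_const _ ((tail_meas F (v n)).indicator measurableSet_Iic), ← mul_assoc]
    gcongr
    exact tail_conv_lower F (v n)
  calc 2 * ∫⁻ y, g y ∂F ≤ 2 * liminf (fun n => ∫⁻ y, k n y ∂F) atTop := by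
        gcongr; exact h1.trans h2
    _ = liminf (fun n => 2 * ∫⁻ y, k n y ∂F) atTop := by
        rw [ENNReal.liminf_const_mul_of_ne_top (by simp)]
    _ ≤ liminf (fun n => tail (mconv F F) (v n) / tail F (v n)) atTop :=
        liminf_le_liminf (Eventually.of_forall h3)
    _ = L := hL.liminf_eq

/-- Domination of tails passes to integrals of continuous monotone functions. -/
lemma tail_dom (F G : Measure ℝ) (x0 : ℝ) (c : ℝ≥0∞)
    (h : ∀ x, x0 ≤ x → c * tail F x ≤ tail G x) (f : ℝ → ℝ) (hf : Continuous f)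
    (hm : Monotone f) (h0 : ∀ x, x ≤ x0 → f x = 0) (hp : ∀ x, 0 ≤ f x) :
    c * ∫⁻ x, ENNReal.ofReal (f x) ∂F ≤ ∫⁻ x, ENNReal.ofReal (f x) ∂G := by
  rw [lintegral_eq_lintegral_meas_lt F (Eventually.of_forall hp) hf.aemeasurable,
    lintegral_eq_lintegral_meas_lt G (Eventually.of_forall hp) hf.aemeasurable]
  have am : Antitone (fun t => F {a | t < f a}) := fun s t hst =>
    measure_mono (fun a (ha : t < f a) => lt_of_le_of_lt hst ha)
  rw [← lintegral_const_mul _ am.measurable]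
  apply setLIntegral_mono_ae' measurableSet_Ioi
  refine Eventually.of_forall fun t ht => ?_
  set S := {a | t < f a} with hS
  rcases S.eq_empty_or_nonempty with he | hne
  · rw [he]; simp
  have lb : ∀ a ∈ S, x0 ≤ a := by
    intro a ha
    by_contra hc
    have h1 := h0 a (not_le.1 hc).le
    have h2 : t < f a := ha
    have h3 : 0 < t := ht
    linarith
  have hbdd : BddBelow S := ⟨x0, lb⟩
  have hop : IsOpen S := isOpen_lt continuous_const hf
  have : S = Ioi (sInf S) := by
    ext a
    constructor
    · intro ha
      obtain ⟨ε, hε, hb⟩ := Metric.isOpen_iff.1 hop a ha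
      have : a - ε/2 ∈ S := hb (by simp [abs_of_pos hε, hε])
      have := csInf_le hbdd this
      simp only [mem_Ioi]; linarith
    · intro ha
      obtain ⟨y, hy, hya⟩ := exists_lt_of_csInf_lt hne ha
      exact lt_of_lt_of_le hy (hm hya.le)
  rw [this]
  exact h _ (le_csInf hne lb)

/-- test function -/
def uu (γ a b x : ℝ) : ℝ := Real.exp (γ * x) * (Real.exp (min (a * x) b) - 1)

lemma uu_cont (γ a b : ℝ) : Continuous (uu γ a b) := by unfold uu; fun_prop

lemma uu_nonneg {γ a b x : ℝ} (ha : 0 ≤ a) (hb : 0 ≤ b) (hx : 0 ≤ x) : 0 ≤ uu γ a b x := by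
  unfold uu
  have : 0 ≤ min (a * x) b := le_min (by positivity) hb
  have := Real.one_le_exp this
  exact mul_nonneg (Real.exp_pos _).le (by linarith)

lemma uu_mono {γ a b x y : ℝ} (hγ : 0 ≤ γ) (ha : 0 ≤ a) (hb : 0 ≤ b) (hx : 0 ≤ x) (hxy : x ≤ y) :
    uu γ a b x ≤ uu γ a b y := by
  unfold uu
  have : 0 ≤ min (a * x) b := le_min (by positivity) hb
  have := Real.one_le_exp this
  have h2 : min (a * x) b ≤ min (a * y) b := by gcongr
  gcongr

lemma uu_add {γ a b x y : ℝ} (ha : 0 ≤ a) (hb : 0 ≤ b) (hx : 0 ≤ x)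
    (hy : 0 ≤ y) : uu γ a b (x + y) ≤ uu γ a b x * Real.exp (γ * y) + Real.exp (γ * x) * uu γ a b y
      + uu γ a b x * uu γ a b y := by
  have h1 : min (a * (x + y)) b ≤ min (a * x) b + min (a * y) b := by
    have := mul_nonneg ha hx
    have := mul_nonneg ha hy
    rcases min_cases (a * x) b with h | h <;> rcases min_cases (a * y) b with h' | h' <;>
    rcases min_cases (a * (x+y)) b with h'' | h'' <;> rw [h.1, h'.1, h''.1] <;> nlinarith
  have h2 := Real.exp_le_exp.2 h1
  rw [Real.exp_add] at h2
  unfold uu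
  rw [mul_add, Real.exp_add]
  have h3 : 0 < Real.exp (γ * x) * Real.exp (γ * y) := by positivity
  have := mul_le_mul_of_nonneg_left h2 h3.le
  nlinarith

lemma conv_upper (F : Measure ℝ) [IsProbabilityMeasure F] (hpos : ∀ᵐ x ∂F, 0 ≤ x)
    {γ a b : ℝ} (ha : 0 ≤ a) (hb : 0 ≤ b) :
    ∫⁻ x, ENNReal.ofReal (uu γ a b x) ∂(mconv F F) ≤
      2 * phi F γ * (∫⁻ x, ENNReal.ofReal (uu γ a b x) ∂F)
        + (∫⁻ x, ENNReal.ofReal (uu γ a b x) ∂F) * (∫⁻ x, ENNReal.ofReal (uu γ a b x) ∂F) := by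
  have mu : Measurable (fun x => ENNReal.ofReal (uu γ a b x)) :=
    (uu_cont γ a b).measurable.ennreal_ofReal
  have me : Measurable (fun x => ENNReal.ofReal (Real.exp (γ * x))) := by fun_prop
  unfold mconv
  rw [lintegral_map mu (by fun_prop), lintegral_prod _ (by
    exact (mu.comp (measurable_fst.add measurable_snd)).aemeasurable)]
  set U := ∫⁻ x, ENNReal.ofReal (uu γ a b x) ∂F with hU
  have key : ∀ᵐ x ∂F, ∫⁻ y, ENNReal.ofReal (uu γ a b (x + y)) ∂F ≤
      ENNReal.ofReal (uu γ a b x) * phi F γ + ENNReal.ofReal (Real.exp (γ * x)) * U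
        + ENNReal.ofReal (uu γ a b x) * U := by
    filter_upwards [hpos] with x hx
    unfold phi
    rw [hU, ← lintegral_const_mul _ me, ← lintegral_const_mul _ mu, ← lintegral_const_mul _ mu,
      ← lintegral_add_left (by fun_prop), ← lintegral_add_left (by fun_prop)]
    apply lintegral_mono_ae
    filter_upwards [hpos] with y hy
    have h1 := uu_nonneg (γ := γ) ha hb hx
    have h2 := uu_nonneg (γ := γ) ha hb hy
    rw [← ENNReal.ofReal_mul h1, ← ENNReal.ofReal_mul h1, ← ENNReal.ofReal_mul (by positivity),
      ← ENNReal.ofReal_add (by positivity) (by positivity),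
      ← ENNReal.ofReal_add (by positivity) (by positivity)]
    exact ENNReal.ofReal_le_ofReal (uu_add ha hb hx hy)
  refine (lintegral_mono_ae key).trans (le_of_eq ?_)
  rw [lintegral_add_left (by fun_prop), lintegral_add_left (by fun_prop),
    lintegral_mul_const _ mu, lintegral_mul_const _ me, lintegral_mul_const _ mu, ← hU]
  unfold phi
  ring

lemma exists_b_s14 (F : Measure ℝ) [IsProbabilityMeasure F] (hpos : ∀ᵐ x ∂F, 0 ≤ x)
    {γ a ε : ℝ} (ha : 0 < a) (hε : 0 < ε) (h1 : phi F γ ≠ ⊤) (h2 : phi F (γ + a) = ⊤) :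
    ∃ b : ℝ, 0 ≤ b ∧ ∫⁻ x, ENNReal.ofReal (uu γ a b x) ∂F = ENNReal.ofReal ε := by
  have ie : Integrable (fun x => Real.exp (γ * x)) F := by
    refine ⟨by fun_prop, ?_⟩
    rw [hasFiniteIntegral_iff_ofReal (Eventually.of_forall fun x => (Real.exp_pos _).le)]
    exact lt_top_iff_ne_top.2 h1
  have bd : ∀ b B : ℝ, b ≤ B → 0 ≤ b → ∀ x, 0 ≤ x →
      ‖uu γ a b x‖ ≤ Real.exp B * Real.exp (γ * x) := by
    intro b B hbB hb x hx
    rw [Real.norm_of_nonneg (uu_nonneg ha.le hb hx)]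
    unfold uu
    have : Real.exp (min (a * x) b) ≤ Real.exp B := Real.exp_le_exp.2 ((min_le_right _ _).trans hbB)
    rw [mul_comm]
    gcongr
    linarith
  set V : ℝ → ℝ := fun b => ∫ x, uu γ a b x ∂F with hV
  have iu : ∀ b, 0 ≤ b → Integrable (uu γ a b) F := by
    intro b hb
    refine (ie.const_mul (Real.exp b)).mono' (uu_cont γ a b).aestronglyMeasurable ?_
    filter_upwards [hpos] with x hx
    exact bd b b le_rfl hb x hx
  have conv : ∀ b, 0 ≤ b → ∫⁻ x, ENNReal.ofReal (uu γ a b x) ∂F = ENNReal.ofReal (V b) := by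
    intro b hb
    rw [hV]
    refine (ofReal_integral_eq_lintegral_ofReal (iu b hb) ?_).symm
    filter_upwards [hpos] with x hx
    exact uu_nonneg ha.le hb hx
  have ex : ∃ n : ℕ, ε < V n := by
    by_contra hcon
    push Not at hcon
    have mc := lintegral_iSup' (μ := F) (f := fun (n : ℕ) x => ENNReal.ofReal (uu γ a n x))
      (fun n => (uu_cont γ a n).measurable.ennreal_ofReal.aemeasurable) (by
        refine Eventually.of_forall fun x n m hnm => ?_
        apply ENNReal.ofReal_le_ofReal
        unfold uu
        have : (n : ℝ) ≤ m := by exact_mod_cast hnm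
        gcongr)
    have le1 : ⨆ n : ℕ, ∫⁻ x, ENNReal.ofReal (uu γ a n x) ∂F ≤ ENNReal.ofReal ε := by
      refine iSup_le fun n => ?_
      rw [conv n (Nat.cast_nonneg n)]
      exact ENNReal.ofReal_le_ofReal (hcon n)
    have le2 : phi F (γ + a) ≤ phi F γ + ∫⁻ x, ⨆ n : ℕ, ENNReal.ofReal (uu γ a n x) ∂F := by
      unfold phi
      rw [← lintegral_add_left (by fun_prop)]
      apply lintegral_mono_ae
      filter_upwards [hpos] with x hx
      obtain ⟨n, hn⟩ := exists_nat_ge (a * x)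
      calc ENNReal.ofReal (Real.exp ((γ + a) * x))
          = ENNReal.ofReal (Real.exp (γ * x)) + ENNReal.ofReal (uu γ a n x) := by
            rw [← ENNReal.ofReal_add (Real.exp_pos _).le (uu_nonneg ha.le (Nat.cast_nonneg n) hx)]
            congr 1
            unfold uu
            rw [min_eq_left hn, add_mul, Real.exp_add]
            ring
        _ ≤ _ := by
            gcongr
            exact le_iSup (fun n : ℕ => ENNReal.ofReal (uu γ a n x)) n
    rw [mc, h2, top_le_iff] at le2
    have := ENNReal.add_lt_top.2 ⟨lt_top_iff_ne_top.2 h1, lt_of_le_of_lt le1 ENNReal.ofReal_lt_top⟩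
    exact this.ne le2
  obtain ⟨n, hn⟩ := ex
  have cV : ContinuousOn V (Icc 0 (n:ℝ)) := by
    apply continuousOn_of_dominated (bound := fun x => Real.exp n * Real.exp (γ * x))
    · intro b _; exact (uu_cont γ a b).aestronglyMeasurable
    · intro b hb
      filter_upwards [hpos] with x hx
      exact bd b n hb.2 hb.1 x hx
    · exact ie.const_mul _
    · refine Eventually.of_forall fun x => ?_
      unfold uu
      fun_prop
  have V0 : V 0 = 0 := by
    apply integral_eq_zero_of_ae
    filter_upwards [hpos] with x hx
    unfold uu
    rw [min_eq_right (by positivity)]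
    simp
  obtain ⟨b, hb, hbe⟩ := intermediate_value_Icc (Nat.cast_nonneg n) cV
    (show ε ∈ Icc (V 0) (V n) from ⟨by rw [V0]; exact hε.le, hn.le⟩)
  exact ⟨b, hb.1, by rw [conv b hb.1, hbe]⟩

lemma upper_s14 (F : Measure ℝ) [IsProbabilityMeasure F] (hpos : ∀ᵐ x ∂F, 0 ≤ x)
    (hub : ∀ x : ℝ, tail F x ≠ 0) {γ c : ℝ} (hγ : 0 ≤ γ) (h1 : phi F γ ≠ ⊤)
    (h2 : ∀ a, 0 < a → phi F (γ + a) = ⊤)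
    (hc : Tendsto (fun x : ℝ => tail (mconv F F) x / tail F x) atTop (𝓝 (ENNReal.ofReal c))) :
    ENNReal.ofReal c ≤ 2 * phi F γ := by
  by_contra hcon
  push Not at hcon
  set P := (phi F γ).toReal with hP
  have eP : phi F γ = ENNReal.ofReal P := (ENNReal.ofReal_toReal h1).symm
  have P0 : 0 ≤ P := ENNReal.toReal_nonneg
  have hcP : 2 * P < c := by
    rw [eP, show (2:ℝ≥0∞) = ENNReal.ofReal 2 by simp, ← ENNReal.ofReal_mul (by norm_num)] at hcon
    exact (ENNReal.ofReal_lt_ofReal_iff_of_nonneg (by positivity)).1 hcon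
  obtain ⟨c', hc1, hc2⟩ := exists_between hcP
  have hev := hc.eventually (lt_mem_nhds ((ENNReal.ofReal_lt_ofReal_iff (by linarith)).2 hc2))
  obtain ⟨x1, hx1⟩ := eventually_atTop.1 hev
  set x0 := max x1 0 with hx0
  have x00 : 0 ≤ x0 := le_max_right _ _
  have dom : ∀ x, x0 ≤ x → ENNReal.ofReal c' * tail F x ≤ tail (mconv F F) x := by
    intro x hx
    have := hx1 x ((le_max_left _ _).trans hx)
    exact (ENNReal.le_div_iff_mul_le (Or.inl (hub x)) (Or.inl (tail_ne_top F x))).1 this.le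
  set ε := (c' - 2 * P) / 2 with hε
  have ε0 : 0 < ε := by rw [hε]; linarith
  -- inequality for every a
  have main : ∀ a, 0 < a → c' * ε ≤ 2 * P * ε + ε * ε +
      c' * (Real.exp (γ * x0) * (Real.exp (a * x0) - 1)) := by
    intro a ha
    obtain ⟨b, hb, hU⟩ := exists_b_s14 F hpos ha ε0 h1 (h2 a ha)
    set f : ℝ → ℝ := fun x => uu γ a b (max x x0) - uu γ a b x0 with hf
    have fm : Monotone f := by
      intro x y hxy
      have := uu_mono (γ := γ) hγ ha.le hb (x00.trans (le_max_right x x0)) (max_le_max_right x0 hxy)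
      simp only [hf]; linarith
    have fc : Continuous f := by
      have := uu_cont γ a b
      simp only [hf]; fun_prop
    have f0 : ∀ x, x ≤ x0 → f x = 0 := by
      intro x hx; simp [hf, max_eq_right hx]
    have fp : ∀ x, 0 ≤ f x := by
      intro x
      have := uu_mono (γ := γ) hγ ha.le hb x00 (le_max_right x x0)
      simp only [hf]; linarith
    have D := tail_dom F (mconv F F) x0 _ dom f fc fm f0 fp
    have ux0 := uu_nonneg (γ := γ) ha.le hb x00
    have ux0' : uu γ a b x0 ≤ Real.exp (γ * x0) * (Real.exp (a * x0) - 1) := by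
      unfold uu; gcongr; exact min_le_left _ _
    have hpos2 : ∀ᵐ x ∂(mconv F F), 0 ≤ x := by
      unfold mconv
      rw [ae_map_iff (by fun_prop) measurableSet_Ici]
      have q1 := Measure.quasiMeasurePreserving_fst (μ := F) (ν := F) |>.ae hpos
      have q2 := Measure.quasiMeasurePreserving_snd (μ := F) (ν := F) |>.ae hpos
      filter_upwards [q1, q2] with p h1 h2
      exact add_nonneg h1 h2
    have D2 : ∫⁻ x, ENNReal.ofReal (f x) ∂(mconv F F) ≤
        ∫⁻ x, ENNReal.ofReal (uu γ a b x) ∂(mconv F F) := by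
      apply lintegral_mono_ae
      filter_upwards [hpos2] with x hx
      apply ENNReal.ofReal_le_ofReal
      simp only [hf]
      rcases le_total x x0 with h | h
      · rw [max_eq_right h]; have := uu_nonneg (γ := γ) ha.le hb hx; linarith
      · rw [max_eq_left h]; linarith
    have D3 := conv_upper F hpos (γ := γ) ha.le hb
    have D4 : ENNReal.ofReal ε ≤ ∫⁻ x, ENNReal.ofReal (f x) ∂F + ENNReal.ofReal (uu γ a b x0) := by
      rw [← hU]
      calc _ ≤ ∫⁻ x, (ENNReal.ofReal (f x) + ENNReal.ofReal (uu γ a b x0)) ∂F := by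
            apply lintegral_mono_ae
            filter_upwards [hpos] with x hx
            rw [← ENNReal.ofReal_add (fp x) ux0]
            apply ENNReal.ofReal_le_ofReal
            simp only [hf, sub_add_cancel]
            exact uu_mono hγ ha.le hb hx (le_max_left _ _)
        _ = _ := by
            rw [lintegral_add_right _ measurable_const]; simp
    have D5 : ENNReal.ofReal c' * ENNReal.ofReal ε ≤
        2 * phi F γ * ENNReal.ofReal ε + ENNReal.ofReal ε * ENNReal.ofReal ε +
          ENNReal.ofReal c' * ENNReal.ofReal (uu γ a b x0) := by
      rw [hU] at D3
      calc _ ≤ ENNReal.ofReal c' * (∫⁻ x, ENNReal.ofReal (f x) ∂F + ENNReal.ofReal (uu γ a b x0)) := by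
            gcongr
        _ ≤ _ := by
            rw [mul_add]
            gcongr
            exact D.trans (D2.trans D3)
    have c'0 : 0 ≤ c' := by linarith
    rw [eP, show (2:ℝ≥0∞) = ENNReal.ofReal 2 by simp,
      ← ENNReal.ofReal_mul (p := 2) (by norm_num), ← ENNReal.ofReal_mul c'0, ← ENNReal.ofReal_mul c'0, ← ENNReal.ofReal_mul (by positivity),
      ← ENNReal.ofReal_mul (by positivity), ← ENNReal.ofReal_add (by positivity) (by positivity),
      ← ENNReal.ofReal_add (by positivity) (by positivity),
      ENNReal.ofReal_le_ofReal_iff (by positivity)] at D5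
    have := mul_le_mul_of_nonneg_left ux0' c'0
    linarith
  have lim : Tendsto (fun a : ℝ => 2 * P * ε + ε * ε +
      c' * (Real.exp (γ * x0) * (Real.exp (a * x0) - 1))) (𝓝[>] 0) (𝓝 (2 * P * ε + ε * ε)) := by
    have : Continuous (fun a : ℝ => 2 * P * ε + ε * ε +
      c' * (Real.exp (γ * x0) * (Real.exp (a * x0) - 1))) := by fun_prop
    have h := this.tendsto 0
    simp only [zero_mul, Real.exp_zero, sub_self, mul_zero, add_zero] at h
    exact h.mono_left nhdsWithin_le_nhds
  have fin := ge_of_tendsto lim (eventually_nhdsWithin_of_forall fun a ha => main a ha)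
  have : c' = 2 * P + 2 * ε := by rw [hε]; ring
  rw [this] at fin
  nlinarith

theorem stmt14 (F : MeasureTheory.Measure ℝ) [MeasureTheory.IsProbabilityMeasure F]
    (hsupp : F (Set.Iio 0) = 0) (hub : ∀ x : ℝ, tail F x ≠ 0)
    (γhat : ℝ) (hγ0 : 0 ≤ γhat) (hγhat : ENNReal.ofReal γhat = gammaHat F) :
    memS F γhat ↔
      ((∃ c : ℝ, 2 ≤ c ∧
          Tendsto (fun x : ℝ => tail (mconv F F) x / tail F x) atTop
            (𝓝 (ENNReal.ofReal c))) ∧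
        ∀ y : ℝ, 0 < y →
          ENNReal.ofReal (Real.exp (γhat * y)) ≤
            liminf (fun x : ℝ => tail F (x - y) / tail F x) atTop) := by
  have hpos : ∀ᵐ x ∂F, 0 ≤ x := by
    rw [ae_iff]
    simpa [Iio_def] using hsupp
  have hne : ∀ x, tail F x ≠ ⊤ := tail_ne_top F
  constructor
  · rintro ⟨h1, h2, h3⟩
    refine ⟨⟨2 * (phi F γhat).toReal, ?_, ?_⟩, ?_⟩
    · have : 1 ≤ phi F γhat := by
        have e : (1:ℝ≥0∞) = ∫⁻ _, 1 ∂F := by simp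
        rw [e]
        apply lintegral_mono_ae
        filter_upwards [hpos] with x hx
        rw [ENNReal.one_le_ofReal]
        exact Real.one_le_exp (by positivity)
      have := (ENNReal.toReal_le_toReal (by simp) h1.ne).2 this
      simp only [ENNReal.toReal_one] at this
      linarith
    · rw [ENNReal.ofReal_mul (by norm_num), ENNReal.ofReal_toReal h1.ne]
      simpa using h3
    · intro y _
      have := (h2 (-y)).liminf_eq
      simp only [neg_mul_neg, ← sub_eq_add_neg] at this
      rw [this]
  · rintro ⟨⟨c, hc2, hc⟩, hl⟩
    have h2 : ∀ a, 0 < a → phi F (γhat + a) = ⊤ := by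
      intro a ha
      by_contra hcon
      have : ENNReal.ofReal (γhat + a) ≤ gammaHat F :=
        le_sSup ⟨_, rfl, lt_top_iff_ne_top.2 hcon⟩
      rw [← hγhat, ENNReal.ofReal_le_ofReal_iff hγ0] at this
      linarith
    have hl0 : ∀ y : ℝ, 0 ≤ y → ENNReal.ofReal (Real.exp (γhat * y)) ≤
            liminf (fun x : ℝ => tail F (x - y) / tail F x) atTop := by
      intro y hy
      rcases hy.eq_or_lt with h | h
      · subst h
        simp [ENNReal.div_self (hub _) (hne _)]
      · exact hl y h
    have hls : ∀ v : ℕ → ℝ, Tendsto v atTop atTop → ∀ y : ℝ, 0 ≤ y →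
        ENNReal.ofReal (Real.exp (γhat * y)) ≤
            liminf (fun n => tail F (v n - y) / tail F (v n)) atTop := by
      intro v hv y hy
      refine (hl0 y hy).trans ?_
      exact liminf_le_liminf_of_le (f := atTop) (g := map v atTop) hv
    have lower : 2 * phi F γhat ≤ ENNReal.ofReal c := by
      apply fatou_conv F (fun n : ℕ => (n:ℝ)) tendsto_natCast_atTop_atTop
      · filter_upwards [hpos] with y hy
        exact hls _ tendsto_natCast_atTop_atTop y hy
      · exact hc.comp tendsto_natCast_atTop_atTop
    have h1 : phi F γhat ≠ ⊤ := by
      intro h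
      rw [h] at lower
      simp at lower
    have eqc : ENNReal.ofReal c = 2 * phi F γhat :=
      le_antisymm (upper_s14 F hpos hub hγ0 h1 h2 hc) lower
    have hlim : ∀ y : ℝ, 0 < y → Tendsto (fun x : ℝ => tail F (x - y) / tail F x) atTop
        (𝓝 (ENNReal.ofReal (Real.exp (γhat * y)))) := by
      intro y0 hy0
      apply tendsto_of_le_liminf_of_limsup_le (hl y0 hy0)
      by_contra hcon
      push Not at hcon
      obtain ⟨a, ha1, ha2⟩ := exists_between hcon
      have hfr := frequently_lt_of_lt_limsup (by isBoundedDefault) ha2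
      obtain ⟨v, hv, hva⟩ := exists_seq_forall_of_frequently hfr
      set d := a - ENNReal.ofReal (Real.exp (γhat * y0)) with hd
      have d0 : d ≠ 0 := (tsub_pos_of_lt ha1).ne'
      have ad : a = ENNReal.ofReal (Real.exp (γhat * y0)) + d := (add_tsub_cancel_of_le ha1.le).symm
      have aT : a ≠ ⊤ := ha2.ne_top
      have key := fatou_conv F v hv
        (fun y => ENNReal.ofReal (Real.exp (γhat * y)) + (Ici y0).indicator (fun _ => d) y) (by
          filter_upwards [hpos] with y hy
          by_cases hyy : y0 ≤ y
          · rw [indicator_of_mem (by exact hyy)]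
            have hv' : Tendsto (fun n => v n - y0) atTop atTop :=
              tendsto_atTop_add_const_right _ _ hv
            have h := hls _ hv' (y - y0) (by linarith)
            calc ENNReal.ofReal (Real.exp (γhat * y)) + d
                ≤ a * ENNReal.ofReal (Real.exp (γhat * (y - y0))) := by
                  rw [ad, add_mul, ← ENNReal.ofReal_mul (Real.exp_pos _).le, ← Real.exp_add]
                  apply add_le_add
                  · apply le_of_eq; congr 2; ring
                  · apply le_mul_of_one_le_right (by simp)
                    rw [ENNReal.one_le_ofReal]
                    exact Real.one_le_exp (mul_nonneg hγ0 (by linarith))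
              _ ≤ a * liminf (fun n => tail F (v n - y0 - (y - y0)) / tail F (v n - y0)) atTop := by
                  gcongr
              _ = liminf (fun n => a * (tail F (v n - y0 - (y - y0)) / tail F (v n - y0))) atTop := by
                  rw [ENNReal.liminf_const_mul_of_ne_top aT]
              _ ≤ _ := by
                  refine liminf_le_liminf (Eventually.of_forall fun n => ?_)
                  calc _ ≤ (tail F (v n - y0) / tail F (v n)) *
                        (tail F (v n - y0 - (y - y0)) / tail F (v n - y0)) := by
                        gcongr; exact (hva n).le
                    _ = _ := by
                        rw [show v n - y0 - (y - y0) = v n - y by ring, mul_comm,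
                          ← mul_div_assoc, ENNReal.div_mul_cancel (hub _) (hne _)]
          · rw [indicator_of_notMem (by exact hyy), add_zero]
            exact hls v hv y hy) _ (hc.comp hv)
      rw [eqc, lintegral_add_left (by fun_prop), lintegral_indicator_const measurableSet_Ici] at key
      change 2 * (phi F γhat + d * F (Ici y0)) ≤ 2 * phi F γhat at key
      have k2 := (ENNReal.mul_le_mul_iff_right (by simp) (by simp)).1 key
      have k3 : d * F (Ici y0) ≠ 0 := by
        refine mul_ne_zero d0 fun h => hub y0 ?_
        exact measure_mono_null Ioi_subset_Ici_self h
      exact absurd k2 (not_le.2 (ENNReal.lt_add_right h1 k3))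
    refine ⟨lt_top_iff_ne_top.2 h1, ?_, eqc ▸ hc⟩
    intro y
    rcases lt_trichotomy y 0 with h | h | h
    · have := hlim (-y) (by linarith)
      simpa using this
    · subst h
      simp [ENNReal.div_self (hub _) (hne _)]
    · have := ((hlim y h).comp (tendsto_atTop_add_const_right atTop y tendsto_id)).inv
      rw [← ENNReal.ofReal_inv_of_pos (Real.exp_pos _), ← Real.exp_neg, ← neg_mul] at this
      refine this.congr fun x => ?_
      simp only [Function.comp, id, add_sub_cancel_right]
      rw [ENNReal.inv_div (Or.inl (hne _)) (Or.inl (hub _))]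
end
end
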